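/- arXiv:1812.01671 — 2 statements merged into one kernel-verified Lean document; each statement's English description precedes it below -/
import Mathlib

section
/- Let p ≥ 3 be a prime, G = SL₂(F_p), and A ⊆ G a set with |A| ≥ 2·|G|^(8/9). Then A³ = G. Furthermore, each of |A⁻¹A|, |AA⁻¹| and |AA| is at least (1/2)·min{ |G|, |A|²/p² }. -/
open Pointwise

instance (p : ℕ) : DecidableEq (Matrix.SpecialLinearGroup (Fin 2) (ZMod p)) := by
  unfold Matrix.SpecialLinearGroup
  infer_instance

/-!
Let `n = |G|`, and suppose that every nontrivial complex representation of `G` has dimension at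
least `d`. The operator `f ↦ k * f` on `L²(G)` commutes with right translations, so each eigenspace
of its Gram operator is a representation of `G`; when `k` has mean zero, an eigenspace with nonzero
eigenvalue is nontrivial, hence of dimension at least `d`. Comparing with the trace gives
`d ‖k * f‖² ≤ n ‖k‖² ‖f‖²`. For `k = 1_A - |A|/n` and `f = 1_B` the function `k * f` equals
`-|A||B|/n` off `AB`, so `d |A| |B| |(AB)ᶜ| ≤ n³` (Gowers).

For `SL₂(𝔽_q)` one may take `d = ⌊q/2⌋` (Frobenius): a nontrivial representation is nontrivial on
the upper unipotent subgroup `𝔽_q`, so some nontrivial character `ψ` of `𝔽_q` occurs in it, and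
conjugation by the diagonal torus shows that all `x ↦ ψ (a² x)` with `a ≠ 0` occur as well.
-/

section SingularVectors

open LinearMap Module Module.End

open scoped InnerProductSpace

variable {𝕜 E F : Type*} [RCLike 𝕜] [NormedAddCommGroup E] [InnerProductSpace 𝕜 E]
  [FiniteDimensional 𝕜 E] [NormedAddCommGroup F] [InnerProductSpace 𝕜 F] [FiniteDimensional 𝕜 F]

theorem sum_norm_sq_map_le_sum_norm_sq_adjoint {ι κ : Type*} [Fintype ι] [Fintype κ] {v : ι → E}
    (hv : Orthonormal 𝕜 v) (b : OrthonormalBasis κ 𝕜 F) (T : E →ₗ[𝕜] F) :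
    ∑ i, ‖T (v i)‖ ^ 2 ≤ ∑ j, ‖adjoint T (b j)‖ ^ 2 :=
  calc ∑ i, ‖T (v i)‖ ^ 2 = ∑ i, ∑ j, ‖⟪b j, T (v i)⟫_𝕜‖ ^ 2 := by
        simp only [b.sum_sq_norm_inner_right]
    _ = ∑ j, ∑ i, ‖⟪v i, adjoint T (b j)⟫_𝕜‖ ^ 2 := by
        rw [Finset.sum_comm]
        simp only [adjoint_inner_right, norm_inner_symm]
    _ ≤ ∑ j, ‖adjoint T (b j)‖ ^ 2 :=
        Finset.sum_le_sum fun j _ => hv.sum_inner_products_le (adjoint T (b j))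

theorem norm_sq_map_of_mem_eigenspace_adjoint_comp_self {T : E →ₗ[𝕜] F} {μ : ℝ} {v : E}
    (hv : v ∈ eigenspace (adjoint T ∘ₗ T) (μ : 𝕜)) : ‖T v‖ ^ 2 = μ * ‖v‖ ^ 2 := by
  have hTv : adjoint T (T v) = (μ : 𝕜) • v := mem_eigenspace_iff.1 hv
  rw [← inner_self_eq_norm_sq (𝕜 := 𝕜) (T v), ← adjoint_inner_right, hTv, inner_smul_right,
    RCLike.re_ofReal_mul, inner_self_eq_norm_sq]

theorem finrank_eigenspace_adjoint_comp_self_mul_le {κ : Type*} [Fintype κ] (T : E →ₗ[𝕜] F)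
    (b : OrthonormalBasis κ 𝕜 F) (μ : ℝ) :
    finrank 𝕜 (eigenspace (adjoint T ∘ₗ T) (μ : 𝕜)) * μ ≤ ∑ j, ‖adjoint T (b j)‖ ^ 2 := by
  set W := eigenspace (adjoint T ∘ₗ T) (μ : 𝕜)
  let e := stdOrthonormalBasis 𝕜 W
  have he : Orthonormal 𝕜 fun i => (e i : E) := e.orthonormal.comp_linearIsometry W.subtypeₗᵢ
  calc finrank 𝕜 W * μ = ∑ i, ‖T (e i)‖ ^ 2 := by
        simp [norm_sq_map_of_mem_eigenspace_adjoint_comp_self (e _).2, he.norm_eq_one]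
    _ ≤ ∑ j, ‖adjoint T (b j)‖ ^ 2 := sum_norm_sq_map_le_sum_norm_sq_adjoint he b T

theorem mul_norm_sq_map_le_of_forall_hasEigenvalue {T : E →ₗ[𝕜] F} {c C : ℝ}
    (h : ∀ μ : ℝ, HasEigenvalue (adjoint T ∘ₗ T) (μ : 𝕜) → c * μ ≤ C) (v : E) :
    c * ‖T v‖ ^ 2 ≤ C * ‖v‖ ^ 2 := by
  have hS : (adjoint T ∘ₗ T).IsSymmetric := isSymmetric_adjoint_comp_self T
  let b := hS.eigenvectorBasis rfl
  let μ := hS.eigenvalues rfl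
  have hTv : ‖T v‖ ^ 2 = ∑ i, μ i * ‖⟪b i, v⟫_𝕜‖ ^ 2 := by
    have hterm (i) : ⟪v, b i⟫_𝕜 * ⟪b i, adjoint T (T v)⟫_𝕜 =
        ((μ i * ‖⟪b i, v⟫_𝕜‖ ^ 2 : ℝ) : 𝕜) := by
      have hb : ⟪b i, adjoint T (T v)⟫_𝕜 = μ i * ⟪b i, v⟫_𝕜 := by
        rw [← comp_apply, ← hS, hS.apply_eigenvectorBasis, inner_smul_left, RCLike.conj_ofReal]
      rw [hb, mul_left_comm, ← inner_conj_symm, RCLike.conj_mul]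
      push_cast
      rfl
    rw [← inner_self_eq_norm_sq (𝕜 := 𝕜) (T v), ← adjoint_inner_right, ← b.sum_inner_mul_inner]
    simp only [hterm, map_sum, RCLike.ofReal_re]
  calc c * ‖T v‖ ^ 2 = ∑ i, c * μ i * ‖⟪b i, v⟫_𝕜‖ ^ 2 := by
        simp only [hTv, Finset.mul_sum, mul_assoc]
    _ ≤ ∑ i, C * ‖⟪b i, v⟫_𝕜‖ ^ 2 := by
        gcongr with i
        exact h _ (hS.hasEigenvalue_eigenvalues rfl i)
    _ = C * ‖v‖ ^ 2 := by rw [← Finset.mul_sum, b.sum_sq_norm_inner_right]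

end SingularVectors

section Convolution

open LinearMap Module Module.End

variable (G : Type*) [Group G]

/-- The right regular representation of `G` on `L²(G)`, `(g • f) x = f (x * g)`. It is realised on
`EuclideanSpace ℂ G` so that convolution operators have adjoints. -/
def rightRegular : Representation ℂ G (EuclideanSpace ℂ G) where
  toFun g :=
    { toFun f := WithLp.toLp 2 fun x => f (x * g)
      map_add' _ _ := rfl
      map_smul' _ _ := rfl }
  map_one' := by ext; simp
  map_mul' g h := by ext f x; exact congrArg f (mul_assoc x g h).symm

variable {G}

@[simp]
theorem rightRegular_apply (g : G) (f : EuclideanSpace ℂ G) (x : G) :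
    rightRegular G g f x = f (x * g) := rfl

variable [Fintype G]

/-- The operator `f ↦ k * f` of convolution by `k` on the left, with respect to counting measure. -/
def convolution (k : G → ℂ) : EuclideanSpace ℂ G →ₗ[ℂ] EuclideanSpace ℂ G where
  toFun f := WithLp.toLp 2 fun x => ∑ y, k (x * y⁻¹) * f y
  map_add' f g := by ext; simp [mul_add, Finset.sum_add_distrib]
  map_smul' c f := by ext; simp [Finset.mul_sum, mul_left_comm]

theorem convolution_apply (k : G → ℂ) (f : EuclideanSpace ℂ G) (x : G) :
    convolution k f x = ∑ y, k (x * y⁻¹) * f y := rfl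

theorem convolution_rightRegular (k : G → ℂ) (g : G) (f : EuclideanSpace ℂ G) :
    convolution k (rightRegular G g f) = rightRegular G g (convolution k f) := by
  ext x
  simp only [convolution_apply, rightRegular_apply]
  exact Fintype.sum_equiv (Equiv.mulRight g) _ _ fun y => by simp [mul_assoc]

theorem adjoint_convolution (k : G → ℂ) :
    (convolution k).adjoint = convolution fun g => star (k g⁻¹) := by
  refine ((LinearMap.eq_adjoint_iff _ _).2 fun f h => ?_).symm
  simp only [PiLp.inner_apply, convolution_apply, RCLike.inner_apply, map_sum, map_mul,
    Finset.sum_mul, Finset.mul_sum]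
  rw [Finset.sum_comm]
  refine Finset.sum_congr rfl fun x _ => Finset.sum_congr rfl fun y _ => ?_
  simp only [mul_inv_rev, inv_inv, RCLike.star_def, RingHomCompTriple.comp_apply,
    RingHom.id_apply]
  ring

theorem norm_sq_convolution_single [DecidableEq G] (k : G → ℂ) (x : G) :
    ‖convolution k (EuclideanSpace.single x 1)‖ ^ 2 = ∑ g, ‖k g‖ ^ 2 := by
  rw [EuclideanSpace.norm_sq_eq]
  simpa [convolution_apply, div_eq_mul_inv] using (Equiv.divRight x).sum_comp fun g => ‖k g‖ ^ 2

theorem convolution_eq_zero_of_forall_eq {k : G → ℂ} (hk : ∑ g, k g = 0) {f : EuclideanSpace ℂ G}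
    {c : ℂ} (hf : ∀ x, f x = c) : convolution k f = 0 := by
  ext x
  have hkx : ∑ y, k (x * y⁻¹) = 0 := by
    rw [← hk, ← (Equiv.divLeft x).sum_comp k]
    simp [div_eq_mul_inv]
  simp [convolution_apply, hf, ← Finset.sum_mul, hkx]

theorem finrank_eigenspace_convolution_mul_le (k : G → ℂ) (μ : ℝ) :
    finrank ℂ (eigenspace (adjoint (convolution k) ∘ₗ convolution k) (μ : ℂ)) * μ ≤
      Fintype.card G * ∑ g, ‖k g‖ ^ 2 := by
  classical
  have hinv : ∑ g, ‖k g⁻¹‖ ^ 2 = ∑ g, ‖k g‖ ^ 2 :=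
    Equiv.sum_comp (Equiv.inv G) fun g => ‖k g‖ ^ 2
  simpa [adjoint_convolution, norm_sq_convolution_single, hinv] using
    finrank_eigenspace_adjoint_comp_self_mul_le (convolution k) (EuclideanSpace.basisFun G ℂ) μ

/-- An eigenspace of the Gram operator of `convolution k`, as a subrepresentation of the right
regular representation. -/
noncomputable def convolutionEigenspace (k : G → ℂ) (μ : ℂ) :
    Subrepresentation (rightRegular G) where
  toSubmodule := eigenspace (adjoint (convolution k) ∘ₗ convolution k) μ
  apply_mem_toSubmodule g f hf := by
    rw [mem_eigenspace_iff] at hf ⊢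
    simp only [comp_apply, adjoint_convolution, convolution_rightRegular] at hf ⊢
    rw [hf, map_smul]

end Convolution

section Indicators

variable {G : Type*} [Fintype G]

/-- The indicator function of `B` as an element of `L²(G)`. -/
noncomputable def indicatorL2 (B : Finset G) : EuclideanSpace ℂ G :=
  WithLp.toLp 2 ((B : Set G).indicator 1)

theorem norm_sq_indicatorL2 (B : Finset G) : ‖indicatorL2 B‖ ^ 2 = B.card := by
  classical
  simp [EuclideanSpace.norm_sq_eq, indicatorL2, Set.indicator_apply, apply_ite]

/-- The indicator function of `A` minus its mean, the component of the indicator function orthogonal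
to the constants. -/
noncomputable def balancedIndicator (A : Finset G) (g : G) : ℂ :=
  (A : Set G).indicator 1 g - (A.dens : ℝ)

theorem sum_balancedIndicator (A : Finset G) : ∑ g, balancedIndicator A g = 0 := by
  classical
  simp [balancedIndicator, Set.indicator_apply]

theorem sum_norm_sq_balancedIndicator_le (A : Finset G) :
    ∑ g, ‖balancedIndicator A g‖ ^ 2 ≤ A.card := by
  classical
  set α : ℝ := (A.dens : ℝ)
  have hαG : Fintype.card G * α = A.card := A.natCast_card_mul_nnratCast_dens
  have hterm (g : G) : ‖balancedIndicator A g‖ ^ 2 = (if g ∈ A then 1 - 2 * α else 0) + α ^ 2 := by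
    by_cases hg : g ∈ A
    · have hval : balancedIndicator A g = ((1 - α : ℝ) : ℂ) := by simp [balancedIndicator, hg, α]
      rw [hval, Complex.norm_real, Real.norm_eq_abs, sq_abs, if_pos hg]
      ring
    · have hval : balancedIndicator A g = ((-α : ℝ) : ℂ) := by simp [balancedIndicator, hg, α]
      rw [hval, Complex.norm_real, Real.norm_eq_abs, sq_abs, if_neg hg]
      ring
  calc ∑ g, ‖balancedIndicator A g‖ ^ 2 = A.card * (1 - 2 * α) + Fintype.card G * α * α := by
        simp only [hterm, Finset.sum_add_distrib, Finset.sum_ite_mem, Finset.univ_inter,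
          Finset.sum_const, nsmul_eq_mul, Finset.card_univ]
        ring
    _ = A.card - A.card * α := by rw [hαG]; ring
    _ ≤ A.card := sub_le_self _ (by positivity)

end Indicators

universe u

/-- Gowers' quasirandomness: every nontrivial finite-dimensional complex representation of `G` has
dimension at least `d`. The representation spaces are taken in the universe of `G`, which suffices
for subrepresentations of `L²(G)`. -/
def IsQuasirandom (G : Type u) [Group G] (d : ℕ) : Prop :=
  ∀ (V : Type u) [AddCommGroup V] [Module ℂ V] [FiniteDimensional ℂ V] (ρ : Representation ℂ G V),
    ¬ ρ.IsTrivial → d ≤ Module.finrank ℂ V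

section Quasirandom

open LinearMap Module Module.End

variable {G : Type u} [Group G] [Fintype G] {d : ℕ}

theorem IsQuasirandom.mul_eigenvalue_le (hG : IsQuasirandom G d)
    {k : G → ℂ} (hk : ∑ g, k g = 0) {μ : ℝ}
    (hμ : HasEigenvalue (adjoint (convolution k) ∘ₗ convolution k) (μ : ℂ)) :
    d * μ ≤ Fintype.card G * ∑ g, ‖k g‖ ^ 2 := by
  let ρ := (convolutionEigenspace k μ).toRepresentation
  obtain ⟨f, hf⟩ := hμ.exists_hasEigenvector
  have hnorm : ‖convolution k f‖ ^ 2 = μ * ‖f‖ ^ 2 :=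
    norm_sq_map_of_mem_eigenspace_adjoint_comp_self hf.1
  have hf0 : 0 < ‖f‖ ^ 2 := by simpa [sq_pos_iff] using hf.2
  by_cases hρ : ρ.IsTrivial
  · have hconst (x : G) : f x = f 1 := by
      have hx : rightRegular G x f = f := congrArg Subtype.val (ρ.isTrivial_apply x ⟨f, hf.1⟩)
      simpa using congrArg (fun h : EuclideanSpace ℂ G => h 1) hx
    have hμ0 : μ = 0 := by
      simpa [convolution_eq_zero_of_forall_eq hk hconst, hf.2] using hnorm
    rw [hμ0, mul_zero]
    positivity
  · have hμ0 : 0 ≤ μ := nonneg_of_mul_nonneg_left (hnorm ▸ sq_nonneg _) hf0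
    calc d * μ ≤ finrank ℂ (convolutionEigenspace k μ).toSubmodule * μ := by
          gcongr
          exact hG _ ρ hρ
      _ ≤ Fintype.card G * ∑ g, ‖k g‖ ^ 2 := finrank_eigenspace_convolution_mul_le k μ

theorem IsQuasirandom.mul_norm_sq_convolution_le (hG : IsQuasirandom G d)
    {k : G → ℂ} (hk : ∑ g, k g = 0) (f : EuclideanSpace ℂ G) :
    d * ‖convolution k f‖ ^ 2 ≤ Fintype.card G * (∑ g, ‖k g‖ ^ 2) * ‖f‖ ^ 2 :=
  mul_norm_sq_map_le_of_forall_hasEigenvalue (fun _ => hG.mul_eigenvalue_le hk) f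

variable [DecidableEq G]

theorem convolution_balancedIndicator_of_notMem_mul {A B : Finset G} {x : G} (hx : x ∉ A * B) :
    convolution (balancedIndicator A) (indicatorL2 B) x =
      ((-(A.dens * B.card) : ℝ) : ℂ) := by
  have hA {y : G} (hy : y ∈ B) : x * y⁻¹ ∉ A := fun h =>
    hx (by simpa using Finset.mul_mem_mul h hy)
  have hterm (y : G) : balancedIndicator A (x * y⁻¹) * indicatorL2 B y =
      if y ∈ B then ((-A.dens : ℝ) : ℂ) else 0 := by
    split_ifs with hy
    · simp [balancedIndicator, indicatorL2, hy, hA hy]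
    · simp [indicatorL2, hy]
  simp only [convolution_apply, hterm, Finset.sum_ite_mem, Finset.univ_inter, Finset.sum_const]
  push_cast
  ring

theorem card_compl_mul_dens_mul_card_sq_le (A B : Finset G) :
    ((A * B)ᶜ.card : ℝ) * (A.dens * B.card) ^ 2 ≤
      ‖convolution (balancedIndicator A) (indicatorL2 B)‖ ^ 2 := by
  set h := convolution (balancedIndicator A) (indicatorL2 B)
  calc ((A * B)ᶜ.card : ℝ) * (A.dens * B.card) ^ 2 = ∑ x ∈ (A * B)ᶜ, ‖h x‖ ^ 2 := by
        rw [← nsmul_eq_mul, ← Finset.sum_const]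
        refine Finset.sum_congr rfl fun x hx => ?_
        rw [convolution_balancedIndicator_of_notMem_mul (Finset.mem_compl.1 hx),
          Complex.norm_real, Real.norm_eq_abs, sq_abs, neg_sq]
    _ ≤ ∑ x, ‖h x‖ ^ 2 := Finset.sum_le_univ_sum_of_nonneg fun x => sq_nonneg _
    _ = ‖h‖ ^ 2 := (EuclideanSpace.norm_sq_eq h).symm

theorem IsQuasirandom.card_compl_mul_mul_le (hG : IsQuasirandom G d) (A B : Finset G) :
    d * A.card * B.card * ((A * B)ᶜ.card : ℝ) ≤ (Fintype.card G : ℝ) ^ 3 := by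
  set n : ℝ := (Fintype.card G : ℝ)
  set h := convolution (balancedIndicator A) (indicatorL2 B)
  have hdens : n * A.dens = A.card := A.natCast_card_mul_nnratCast_dens
  have hupper : d * ‖h‖ ^ 2 ≤ n * A.card * B.card :=
    calc d * ‖h‖ ^ 2 ≤ n * (∑ g, ‖balancedIndicator A g‖ ^ 2) * ‖indicatorL2 B‖ ^ 2 :=
          hG.mul_norm_sq_convolution_le (sum_balancedIndicator A) _
      _ ≤ n * A.card * B.card := by
          rw [norm_sq_indicatorL2]
          gcongr
          exact sum_norm_sq_balancedIndicator_le A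
  rcases (by positivity : (0 : ℝ) ≤ A.card * B.card).eq_or_lt with hAB | hAB
  · rw [mul_assoc (d : ℝ), ← hAB, mul_zero, zero_mul]
    positivity
  · refine le_of_mul_le_mul_right ?_ hAB
    calc d * A.card * B.card * ((A * B)ᶜ.card : ℝ) * (A.card * B.card)
        = n ^ 2 * (d * (((A * B)ᶜ.card : ℝ) * (A.dens * B.card) ^ 2)) := by
          rw [← hdens]
          ring
      _ ≤ n ^ 2 * (d * ‖h‖ ^ 2) := by
          gcongr
          exact card_compl_mul_dens_mul_card_sq_le A B
      _ ≤ n ^ 2 * (n * A.card * B.card) := mul_le_mul_of_nonneg_left hupper (sq_nonneg n)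
      _ = n ^ 3 * (A.card * B.card) := by ring

theorem IsQuasirandom.mul_mul_eq_univ (hG : IsQuasirandom G d) {A B C : Finset G}
    (h : (Fintype.card G : ℝ) ^ 3 < d * A.card * B.card * C.card) :
    A * B * C = Finset.univ := by
  refine Finset.eq_univ_iff_forall.2 fun g => ?_
  by_contra hg
  have hC : C.card ≤ (A * B)ᶜ.card := by
    refine Finset.card_le_card_of_injOn (g * ·⁻¹) (fun c hc => ?_)
      fun c _ c' _ h => by simpa using h
    refine Finset.mem_coe.2 (Finset.mem_compl.2 fun hgc => hg ?_)
    simpa using Finset.mul_mem_mul hgc hc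
  refine (hG.card_compl_mul_mul_le A B).not_gt (h.trans_le ?_)
  gcongr

theorem IsQuasirandom.half_card_le_card_mul (hG : IsQuasirandom G d) {A B : Finset G}
    (h : 2 * (Fintype.card G : ℝ) ^ 2 ≤ d * A.card * B.card) :
    2⁻¹ * (Fintype.card G : ℝ) ≤ (A * B).card := by
  have hn : (0 : ℝ) < Fintype.card G := Nat.cast_pos.2 Fintype.card_pos
  have hcompl : 2 * ((A * B)ᶜ.card : ℝ) ≤ Fintype.card G := by
    refine le_of_mul_le_mul_left ?_ (pow_pos hn 2)
    calc (Fintype.card G : ℝ) ^ 2 * (2 * ((A * B)ᶜ.card : ℝ))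
        = 2 * (Fintype.card G : ℝ) ^ 2 * ((A * B)ᶜ.card : ℝ) := by ring
      _ ≤ d * A.card * B.card * ((A * B)ᶜ.card : ℝ) := by gcongr
      _ ≤ (Fintype.card G : ℝ) ^ 3 := hG.card_compl_mul_mul_le A B
      _ = (Fintype.card G : ℝ) ^ 2 * Fintype.card G := by ring
  have hsum : ((A * B).card : ℝ) + (A * B)ᶜ.card = Fintype.card G :=
    mod_cast Finset.card_add_card_compl (A * B)
  linarith

end Quasirandom

section Weights

open Module Module.End

variable {A V : Type*} [AddCommGroup A] [AddCommGroup V] [Module ℂ V]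

/-- The weight space of `ψ` in a representation `σ` of the additive group `A`: the vectors on which
`A` acts through the character `ψ`. -/
def weightSpace (σ : Representation ℂ (Multiplicative A) V) (ψ : AddChar A ℂ) : Submodule ℂ V :=
  ⨅ a : A, eigenspace (σ (.ofAdd a)) (ψ a)

theorem mem_weightSpace {σ : Representation ℂ (Multiplicative A) V} {ψ : AddChar A ℂ} {v : V} :
    v ∈ weightSpace σ ψ ↔ ∀ a : A, σ (.ofAdd a) v = ψ a • v := by
  simp [weightSpace, Submodule.mem_iInf]

theorem iSupIndep_weightSpace (σ : Representation ℂ (Multiplicative A) V) :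
    iSupIndep (weightSpace σ) := by
  have hcomm (a b : A) : Commute (σ (.ofAdd a)) (σ (.ofAdd b)) := (Commute.all _ _).map σ
  have hgen : iSupIndep fun χ : A → ℂ => ⨅ a, maxGenEigenspace (σ (.ofAdd a)) (χ a) :=
    independent_iInf_maxGenEigenspace_of_forall_mapsTo _ fun a b μ =>
      mapsTo_maxGenEigenspace_of_comm (hcomm b a) μ
  have hchar : iSupIndep fun ψ : AddChar A ℂ => ⨅ a, maxGenEigenspace (σ (.ofAdd a)) (ψ a) :=
    hgen.comp DFunLike.coe_injective
  exact hchar.mono fun ψ => iInf_mono fun a => genEigenspace_le_maximal _ _ 1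

theorem card_le_finrank_of_weightSpace_ne_bot [FiniteDimensional ℂ V]
    {σ : Representation ℂ (Multiplicative A) V} {S : Finset (AddChar A ℂ)}
    (hS : ∀ ψ ∈ S, weightSpace σ ψ ≠ ⊥) : S.card ≤ finrank ℂ V := by
  have hind := iSupIndep_weightSpace σ
  let := hind.fintypeNeBotOfFiniteDimensional
  calc S.card = Fintype.card S := (Fintype.card_coe S).symm
    _ ≤ Fintype.card {ψ // weightSpace σ ψ ≠ ⊥} :=
        Fintype.card_le_of_injective (fun ψ : S => ⟨ψ, hS ψ ψ.2⟩) fun ψ χ h => by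
          simpa only [Subtype.mk.injEq, SetLike.coe_eq_coe] using h
    _ ≤ finrank ℂ V := hind.subtype_ne_bot_le_finrank

variable [Finite A]

theorem iSup_weightSpace (σ : Representation ℂ (Multiplicative A) V) :
    ⨆ ψ, weightSpace σ ψ = ⊤ := by
  classical
  have := Fintype.ofFinite A
  refine eq_top_iff.2 fun v _ => ?_
  let proj (ψ : AddChar A ℂ) : V := ∑ a, ψ (-a) • σ (.ofAdd a) v
  have hproj (ψ : AddChar A ℂ) : proj ψ ∈ weightSpace σ ψ := by
    refine mem_weightSpace.2 fun b => ?_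
    simp only [proj, map_sum, map_smul, Finset.smul_sum]
    refine Fintype.sum_equiv (Equiv.addLeft b) _ _ fun a => ?_
    have hψ : ψ (-a) = ψ b * ψ (-(b + a)) := by
      rw [← AddChar.map_add_eq_mul, neg_add, add_neg_cancel_left]
    simp [smul_smul, ofAdd_add, hψ]
  have hsum : ∑ ψ, proj ψ = (Fintype.card A : ℂ) • v := by
    simp only [proj]
    rw [Finset.sum_comm]
    simp [← Finset.sum_smul, AddChar.sum_apply_eq_ite]
  have hv : v = (Fintype.card A : ℂ)⁻¹ • ∑ ψ, proj ψ := by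
    rw [hsum, inv_smul_smul₀ (Nat.cast_ne_zero.2 Fintype.card_ne_zero)]
  rw [hv]
  exact Submodule.smul_mem _ _ <| Submodule.sum_mem _ fun ψ _ =>
    Submodule.mem_iSup_of_mem ψ (hproj ψ)

theorem exists_ne_one_weightSpace_ne_bot {σ : Representation ℂ (Multiplicative A) V}
    (hσ : ¬ σ.IsTrivial) : ∃ ψ ≠ 1, weightSpace σ ψ ≠ ⊥ := by
  by_contra! h
  refine hσ ⟨fun a => LinearMap.ext fun v => ?_⟩
  have htop : weightSpace σ 1 = ⊤ := by
    refine eq_top_iff.2 (iSup_weightSpace σ ▸ iSup_le fun ψ => ?_)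
    by_cases hψ : ψ = 1
    · rw [hψ]
    · simp [h ψ hψ]
  have hv : v ∈ weightSpace σ 1 := htop ▸ Submodule.mem_top
  simpa using mem_weightSpace.1 hv a.toAdd

end Weights

section SpecialLinearGroup

open Matrix Matrix.SpecialLinearGroup MatrixGroups Module

section Field

variable (F : Type*) [Field F]

/-- The parametrisation `b ↦ !![1, b; 0, 1]` of the upper unipotent subgroup of `SL(2, F)`. -/
def unipotent : Multiplicative F →* SL(2, F) where
  toFun b := transvection zero_ne_one b.toAdd
  map_one' := transvection_coeff_zero zero_ne_one
  map_mul' a b := transvection_add zero_ne_one a.toAdd b.toAdd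

variable {F}

theorem coe_unipotent (b : F) :
    (unipotent F (.ofAdd b) : Matrix (Fin 2) (Fin 2) F) = !![1, b; 0, 1] := by
  ext i j
  fin_cases i <;> fin_cases j <;> simp [unipotent, transvection_coe]

theorem diag2_mul_unipotent {a : F} (ha : a ≠ 0) (b : F) :
    diag2 a ha * unipotent F (.ofAdd b) = unipotent F (.ofAdd (a ^ 2 * b)) * diag2 a ha := by
  have hentry : a * b = a ^ 2 * b * a⁻¹ := by field_simp
  apply Subtype.ext
  simp [diag2_coe', coe_unipotent, hentry]

theorem isConj_transvection_one_zero (b : F) :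
    IsConj (unipotent F (.ofAdd (-b))) (transvection one_ne_zero b) := by
  let w : SL(2, F) := ⟨!![0, 1; -1, 0], by simp⟩
  refine isConj_iff.2 ⟨w, ?_⟩
  rw [mul_inv_eq_iff_eq_mul]
  ext i j
  rw [coe_mul, coe_mul, coe_unipotent]
  fin_cases i <;> fin_cases j <;> simp [w, transvection_coe, Matrix.mul_apply]

variable {V : Type*} [AddCommGroup V] [Module ℂ V] {ρ : Representation ℂ SL(2, F) V}

theorem isTrivial_of_isTrivial_comp_unipotent
    (h : Representation.IsTrivial (ρ.comp (unipotent F))) : ρ.IsTrivial := by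
  have hupper (b : F) : ρ (unipotent F (.ofAdd b)) = 1 := h.out _
  have hlower (b : F) : ρ (transvection one_ne_zero b) = 1 := by
    simpa only [hupper, isConj_one_right] using ρ.map_isConj (isConj_transvection_one_zero b)
  refine ⟨fun g => SL2.transvection_induction (ρ · = 1) (fun i j hij c => ?_)
    (fun g h hg hh => ?_) g⟩
  · fin_cases i <;> fin_cases j
    · exact absurd rfl hij
    · exact hupper c
    · exact hlower c
    · exact absurd rfl hij
  · rw [map_mul, hg, hh, one_mul]

theorem weightSpace_mulShift_sq_ne_bot {ψ : AddChar F ℂ} {a : F} (ha : a ≠ 0)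
    (hψ : weightSpace (ρ.comp (unipotent F)) ψ ≠ ⊥) :
    weightSpace (ρ.comp (unipotent F)) (ψ.mulShift (a ^ 2)) ≠ ⊥ := by
  obtain ⟨v, hv, hv0⟩ := (Submodule.ne_bot_iff _).1 hψ
  refine (Submodule.ne_bot_iff _).2 ⟨ρ (diag2 a ha)⁻¹ v, mem_weightSpace.2 fun b => ?_, ?_⟩
  · have hconj : unipotent F (.ofAdd b) * (diag2 a ha)⁻¹ =
        (diag2 a ha)⁻¹ * unipotent F (.ofAdd (a ^ 2 * b)) := by
      rw [mul_inv_eq_iff_eq_mul, mul_assoc, ← diag2_mul_unipotent, inv_mul_cancel_left]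
    calc ρ (unipotent F (.ofAdd b)) (ρ (diag2 a ha)⁻¹ v)
        = ρ (diag2 a ha)⁻¹ (ρ (unipotent F (.ofAdd (a ^ 2 * b))) v) := by
          simp only [← Module.End.mul_apply, ← map_mul, hconj]
      _ = ψ.mulShift (a ^ 2) b • ρ (diag2 a ha)⁻¹ v := by
          rw [← map_smul]
          exact congrArg _ (mem_weightSpace.1 hv (a ^ 2 * b))
  · exact fun h => hv0 (by simpa using congrArg (ρ (diag2 a ha)) h)

end Field

theorem half_card_le_card_image_sq (F : Type*) [Field F] [Fintype F] [DecidableEq F] :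
    Fintype.card F / 2 ≤ (Finset.univ.image fun a : Fˣ => (a ^ 2 : F)).card := by
  have hfiber : ∀ s ∈ Finset.univ.image fun a : Fˣ => (a ^ 2 : F),
      ({a : Fˣ | (a ^ 2 : F) = s} : Finset Fˣ).card ≤ 2 := by
    intro s hs
    obtain ⟨b, -, rfl⟩ := Finset.mem_image.1 hs
    refine (Finset.card_le_card fun a ha => ?_).trans (Finset.card_le_two (a := b) (b := -b))
    have hab : (a ^ 2 : F) = b ^ 2 := by simpa using ha
    simpa [Units.ext_iff] using sq_eq_sq_iff_eq_or_eq_neg.1 hab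
  have hcard := Finset.card_le_mul_card_image _ 2 hfiber
  rw [Finset.card_univ, Fintype.card_units] at hcard
  omega

theorem isQuasirandom_SL2 (F : Type u) [Field F] [Fintype F] :
    IsQuasirandom SL(2, F) (Fintype.card F / 2) := by
  classical
  intro V _ _ _ ρ hρ
  obtain ⟨ψ, hψ1, hψ⟩ := exists_ne_one_weightSpace_ne_bot (σ := ρ.comp (unipotent F))
    (mt isTrivial_of_isTrivial_comp_unipotent hρ)
  have hinj : Function.Injective ψ.mulShift :=
    AddChar.to_mulShift_inj_of_isPrimitive (.of_ne_one hψ1)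
  calc Fintype.card F / 2 ≤ (Finset.univ.image fun a : Fˣ => (a ^ 2 : F)).card :=
        half_card_le_card_image_sq F
    _ = ((Finset.univ.image fun a : Fˣ => (a ^ 2 : F)).image ψ.mulShift).card :=
        (Finset.card_image_of_injective _ hinj).symm
    _ ≤ finrank ℂ V := by
      refine card_le_finrank_of_weightSpace_ne_bot (σ := ρ.comp (unipotent F)) fun χ hχ => ?_
      simp only [Finset.mem_image, Finset.mem_univ, true_and, exists_exists_eq_and] at hχ
      obtain ⟨a, rfl⟩ := hχ
      exact weightSpace_mulShift_sq_ne_bot a.ne_zero hψ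

theorem card_specialLinearGroup_mul_card_units (n R : Type*) [DecidableEq n] [Fintype n]
    [Nonempty n] [CommRing R] :
    Nat.card (SpecialLinearGroup n R) * Nat.card Rˣ = Nat.card (GL n R) := by
  let det : GL n R →* Rˣ := GeneralLinearGroup.det
  have hker : Nat.card (SpecialLinearGroup n R) = Nat.card det.ker := by
    have hrange : Set.range (toGL : SpecialLinearGroup n R → GL n R) = det.ker := range_toGL
    exact (Nat.card_range_of_injective toGL_injective).symm.trans (by rw [hrange]; rfl)
  have hrange : det.range = ⊤ := MonoidHom.range_eq_top.2 GeneralLinearGroup.det_surjective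
  rw [hker, ← det.ker.card_mul_index, Subgroup.index_ker, hrange, Subgroup.card_top]

theorem card_SL2 (F : Type*) [Field F] [Fintype F] :
    Nat.card SL(2, F) = Fintype.card F * (Fintype.card F ^ 2 - 1) := by
  set q := Fintype.card F
  have hq : 0 < q - 1 := Nat.sub_pos_of_lt Fintype.one_lt_card
  refine Nat.eq_of_mul_eq_mul_right hq ?_
  calc Nat.card SL(2, F) * (q - 1) = Nat.card SL(2, F) * Nat.card Fˣ := by
        rw [Nat.card_units, Nat.card_eq_fintype_card (α := F)]
    _ = ∏ i : Fin 2, (q ^ 2 - q ^ (i : ℕ)) := by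
        rw [card_specialLinearGroup_mul_card_units, Matrix.card_GL_field]
    _ = (q ^ 2 - 1) * (q * (q - 1)) := by simp [Fin.prod_univ_two, sq, Nat.mul_sub]
    _ = q * (q ^ 2 - 1) * (q - 1) := by ring

theorem card_SL2_le (F : Type*) [Field F] [Fintype F] :
    Nat.card SL(2, F) ≤ (4 * (Fintype.card F / 2)) ^ 3 := by
  have hq : 1 < Fintype.card F := Fintype.one_lt_card
  calc Nat.card SL(2, F) = Fintype.card F * (Fintype.card F ^ 2 - 1) := card_SL2 F
    _ ≤ Fintype.card F * Fintype.card F ^ 2 := Nat.mul_le_mul_left _ (Nat.sub_le _ _)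
    _ = Fintype.card F ^ 3 := by ring
    _ ≤ (4 * (Fintype.card F / 2)) ^ 3 := by
        gcongr
        omega

theorem quasirandom_thresholds_of_two_mul_rpow_le {n a d : ℝ} (hn : 0 < n) (hnd : n ≤ (4 * d) ^ 3)
    (ha : 2 * n ^ (8 / 9 : ℝ) ≤ a) (han : a ≤ n) :
    2 * n ^ 2 ≤ d * a * a ∧ n ^ 3 < d * a * a * a := by
  set x : ℝ := n ^ (1 / 9 : ℝ)
  have hx : 0 < x := Real.rpow_pos_of_pos hn _
  have hn9 : n = x ^ 9 := by
    rw [← Real.rpow_natCast, ← Real.rpow_mul hn.le]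
    norm_num
  have hn8 : n ^ (8 / 9 : ℝ) = x ^ 8 := by
    rw [← Real.rpow_natCast, ← Real.rpow_mul hn.le]
    norm_num
  rw [hn8] at ha
  rw [hn9] at hnd han ⊢
  have hx2 : 2 ≤ x := by
    refine le_of_mul_le_mul_right ?_ (pow_pos hx 8)
    calc 2 * x ^ 8 ≤ x ^ 9 := ha.trans han
      _ = x * x ^ 8 := by ring
  have hxd : x ^ 3 / 4 ≤ d := by
    have hx3 : x ^ 3 ≤ 4 * d := (Odd.pow_le_pow (by decide : Odd 3)).1 (by rwa [← pow_mul])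
    linarith
  have hd : 0 < d := lt_of_lt_of_le (by positivity) hxd
  have ha0 : 0 < a := lt_of_lt_of_le (by positivity) ha
  constructor
  · calc 2 * (x ^ 9) ^ 2 ≤ x * (x ^ 9) ^ 2 := by gcongr
      _ = x ^ 3 / 4 * (2 * x ^ 8) * (2 * x ^ 8) := by ring
      _ ≤ d * a * a := by gcongr
  · calc (x ^ 9) ^ 3 < 2 * (x ^ 9) ^ 3 := lt_two_mul_self (by positivity)
      _ = x ^ 3 / 4 * (2 * x ^ 8) * (2 * x ^ 8) * (2 * x ^ 8) := by ring
      _ ≤ d * a * a * a := by gcongr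

theorem SL2_large_set_covers_general {F : Type*} [Field F] [Finite F] [DecidableEq SL(2, F)]
    {A : Finset SL(2, F)} (hA : 2 * (Nat.card SL(2, F) : ℝ) ^ ((8 : ℝ) / 9) ≤ A.card) :
    ((A * A * A : Finset SL(2, F)) : Set SL(2, F)) = Set.univ ∧
    2⁻¹ * (Nat.card SL(2, F) : ℝ) ≤ (A⁻¹ * A).card ∧
    2⁻¹ * (Nat.card SL(2, F) : ℝ) ≤ (A * A⁻¹).card ∧
    2⁻¹ * (Nat.card SL(2, F) : ℝ) ≤ (A * A).card := by
  have := Fintype.ofFinite F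
  have := Fintype.ofFinite SL(2, F)
  have hG := isQuasirandom_SL2 F
  obtain ⟨htwo, hthree⟩ := quasirandom_thresholds_of_two_mul_rpow_le
    (d := (Fintype.card F / 2 : ℕ)) (Nat.cast_pos.2 Nat.card_pos) (mod_cast card_SL2_le F) hA
    (by simpa using Finset.card_le_univ A)
  rw [Nat.card_eq_fintype_card] at htwo hthree ⊢
  refine ⟨?_, hG.half_card_le_card_mul ?_, hG.half_card_le_card_mul ?_,
    hG.half_card_le_card_mul htwo⟩
  · rw [hG.mul_mul_eq_univ hthree, Finset.coe_univ]
  · rwa [Finset.card_inv]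
  · rwa [Finset.card_inv]

end SpecialLinearGroup

/-- **Lemma 2.2**: for a prime `p ≥ 3` and `A ⊆ G = SL₂(F_p)` with `|A| ≥ 2|G|^{8/9}`,
one has `A³ = G`, and moreover each of `|A⁻¹A|`, `|AA⁻¹|`, `|AA|` is at least
`(1/2)·min{|G|, |A|²/p²}`. -/
theorem SL2_large_set_covers
    (p : ℕ) (hp : p.Prime) (hp3 : 3 ≤ p)
    (A : Finset (Matrix.SpecialLinearGroup (Fin 2) (ZMod p)))
    (hA : 2 * (Nat.card (Matrix.SpecialLinearGroup (Fin 2) (ZMod p)) : ℝ) ^ ((8 : ℝ) / 9)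
        ≤ (A.card : ℝ)) :
    ((A * A * A : Finset (Matrix.SpecialLinearGroup (Fin 2) (ZMod p))) :
        Set (Matrix.SpecialLinearGroup (Fin 2) (ZMod p))) = Set.univ ∧
    2⁻¹ * min (Nat.card (Matrix.SpecialLinearGroup (Fin 2) (ZMod p)) : ℝ)
        ((A.card : ℝ) ^ 2 / (p : ℝ) ^ 2) ≤ ((A⁻¹ * A).card : ℝ) ∧
    2⁻¹ * min (Nat.card (Matrix.SpecialLinearGroup (Fin 2) (ZMod p)) : ℝ)
        ((A.card : ℝ) ^ 2 / (p : ℝ) ^ 2) ≤ ((A * A⁻¹).card : ℝ) ∧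
    2⁻¹ * min (Nat.card (Matrix.SpecialLinearGroup (Fin 2) (ZMod p)) : ℝ)
        ((A.card : ℝ) ^ 2 / (p : ℝ) ^ 2) ≤ ((A * A).card : ℝ) := by
  have := Fact.mk hp
  obtain ⟨hcover, hinv_mul, hmul_inv, hmul⟩ := SL2_large_set_covers_general hA
  have hmin {x y : ℝ} : 2⁻¹ * min x y ≤ 2⁻¹ * x := by gcongr; exact min_le_left x y
  exact ⟨hcover, hmin.trans hinv_mul, hmin.trans hmul_inv, hmin.trans hmul⟩
end

section
/- There exists an absolute constant C such that the following holds. Let p be a prime and A a finite symmetric generating set of SL₂(F_p) with K := |A³|/|A|. Then for every τ ∈ F_p with τ ≠ 0 and every integer k ≥ 2: |A^k ∩ C_τ| ≤ C·( K^((4k−4)/3)·|A|^(2/3) + K^k·|A|^(1/3) ); moreover, if the equation τ = γ + γ⁻¹ has no solution γ ∈ F_p*, then |A^k ∩ C_τ| ≤ C·K^((4k−4)/3)·|A|^(2/3). -/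
open Pointwise

/-!
Let `S` be the intersection of `A ^ k` with the elements of trace `τ`. Consider the triples
`(x, y, z)` of distinct elements of `S` and the map `(x, y, z) ↦ (x y⁻¹, z y⁻¹) = (g, h)`. Its
fibre consists of the `y` for which `y`, `g y`, `h y` all have trace `τ`. These are linear
conditions on `y`, so three points of one fibre are collinear unless `1, g, h` are linearly
dependent, in which case `y, g y, h y` are collinear. The determinant is quadratic along a line, so
three collinear matrices of equal trace and determinant `1` span an isotropic line, and such a line
singles out a common eigenvector of `y`, `g y` and `h y`. Hence the fibres have at most two
elements over triples in which `y` does not share an eigenvector with both `x` and `z`, and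
`|S|³ ≤ 2 |S S⁻¹|² + 3 |S|² + |S| E²`, where `E` bounds the number of elements of `S` that share
an eigenvector with a given one. If `τ` is not of the form `γ + γ⁻¹`, there are no eigenvectors and
`E = 0`.

To bound `E`, let `T` be the set of elements of `S` with eigenvector `v` and eigenvalue `γ`, and
choose `b ∈ A` moving the line of `v`. The map `(s, t, r) ↦ s (b⁻¹ t b) r` is injective on `T³`
up to one value of `t`, so `(|T| - 1)³ ≤ |A ^ (3k + 2)|`. The sizes of `A ^ (2k)` and
`A ^ (3k + 2)` are controlled by the tripling constant.
-/

open Matrix Finset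
open scoped MatrixGroups

section Wedge

variable {R : Type*} [CommRing R]

/-- The area form of the plane, i.e. the determinant of the matrix with rows `v` and `w`. Over a
field it vanishes exactly on pairs of proportional vectors. -/
def wedge (v w : Fin 2 → R) : R :=
  v 0 * w 1 - v 1 * w 0

lemma wedge_self (v : Fin 2 → R) : wedge v v = 0 := by
  simp only [wedge]; ring

lemma wedge_smul_left (c : R) (v w : Fin 2 → R) : wedge (c • v) w = c * wedge v w := by
  simp only [wedge, Pi.smul_apply, smul_eq_mul]; ring

lemma wedge_smul_right (c : R) (v w : Fin 2 → R) : wedge v (c • w) = c * wedge v w := by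
  simp only [wedge, Pi.smul_apply, smul_eq_mul]; ring

lemma wedge_swap (v w : Fin 2 → R) : wedge w v = -wedge v w := by
  simp only [wedge]; ring

lemma wedge_sub_right (v w w' : Fin 2 → R) :
    wedge v (w - w') = wedge v w - wedge v w' := by
  simp only [wedge, Pi.sub_apply]; ring

lemma wedge_mulVec_mulVec (M : Matrix (Fin 2) (Fin 2) R) (v w : Fin 2 → R) :
    wedge (M *ᵥ v) (M *ᵥ w) = M.det * wedge v w := by
  simp only [wedge, det_fin_two, mulVec, dotProduct, Fin.sum_univ_two]; ring

lemma wedge_smul_smul (g : SL(2, R)) (v w : Fin 2 → R) :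
    wedge (g • v) (g • w) = wedge v w :=
  (wedge_mulVec_mulVec _ v w).trans (by rw [g.det_coe, one_mul])

lemma wedge_mulVec_add_wedge_mulVec (M : Matrix (Fin 2) (Fin 2) R) (v w : Fin 2 → R) :
    wedge (M *ᵥ v) w + wedge v (M *ᵥ w) = M.trace * wedge v w := by
  simp only [wedge, trace_fin_two, mulVec, dotProduct, Fin.sum_univ_two]; ring

lemma trace_mul_vecMulVec_rotate (M : Matrix (Fin 2) (Fin 2) R) (v : Fin 2 → R) :
    (M * vecMulVec v ![-v 1, v 0]).trace = wedge v (M *ᵥ v) := by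
  rw [mul_vecMulVec, trace_vecMulVec]
  simp only [wedge, dotProduct, Fin.sum_univ_two, cons_val_zero, cons_val_one]; ring

end Wedge

section WedgeField

variable {F : Type*} [Field F] {v w : Fin 2 → F}

lemma exists_eq_smul_of_wedge_eq_zero (hv : v ≠ 0) (h : wedge v w = 0) : ∃ c : F, w = c • v := by
  rw [wedge] at h
  obtain ⟨i, hi⟩ := Function.ne_iff.mp hv
  refine ⟨w i / v i, funext fun j => ?_⟩
  rw [Pi.smul_apply, smul_eq_mul, div_mul_eq_mul_div, eq_div_iff hi]
  fin_cases i <;> fin_cases j <;> grind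

lemma eq_zero_of_mulVec_eq_zero_of_wedge_ne_zero {M : Matrix (Fin 2) (Fin 2) F}
    (hvw : wedge v w ≠ 0) (hv : M *ᵥ v = 0) (hw : M *ᵥ w = 0) : M = 0 := by
  ext i j
  have hvi := congrFun hv i
  have hwi := congrFun hw i
  simp only [mulVec, dotProduct, Fin.sum_univ_two, Pi.zero_apply] at hvi hwi
  refine (mul_eq_zero.mp ?_).resolve_left hvw
  fin_cases j
  · simp only [wedge, Fin.zero_eta]
    linear_combination w 1 * hvi - v 1 * hwi
  · simp only [wedge, Fin.mk_one]
    linear_combination v 0 * hwi - w 0 * hvi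

/-- With `v` spanning the kernel, a trace-zero singular `D` acts as `w ↦ c (v ∧ w) v`. -/
lemma exists_eq_smul_vecMulVec_rotate {D : Matrix (Fin 2) (Fin 2) F} (htr : D.trace = 0)
    (hdet : D.det = 0) : ∃ (c : F) (v : Fin 2 → F), v ≠ 0 ∧ D = c • vecMulVec v ![-v 1, v 0] := by
  obtain ⟨v, hv, hDv⟩ := exists_mulVec_eq_zero_iff.mpr hdet
  have hrot : ![-v 1, v 0] ≠ 0 := fun h =>
    hv (funext (Fin.forall_fin_two.mpr ⟨congrFun h 1, neg_eq_zero.mp (congrFun h 0)⟩))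
  have hrow (i : Fin 2) : ∃ a : F, D i = a • ![-v 1, v 0] := by
    refine exists_eq_smul_of_wedge_eq_zero hrot ?_
    have hDvi := congrFun hDv i
    simp only [mulVec, dotProduct, Fin.sum_univ_two, Pi.zero_apply] at hDvi
    simp only [wedge, cons_val_zero, cons_val_one]
    linear_combination -hDvi
  choose a ha using hrow
  obtain ⟨c, rfl⟩ : ∃ c : F, a = c • v := by
    refine exists_eq_smul_of_wedge_eq_zero hv ?_
    rw [trace_fin_two, ha 0, ha 1] at htr
    simp only [Pi.smul_apply, smul_eq_mul, cons_val_zero, cons_val_one] at htr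
    rw [wedge]
    linear_combination htr
  refine ⟨c, v, hv, ?_⟩
  ext i j
  simp only [ha i, Pi.smul_apply, Matrix.smul_apply, vecMulVec_apply, smul_eq_mul, mul_assoc]

end WedgeField

section LineStabilizer

/-- The matrices mapping the line spanned by `v` into itself. For `v ≠ 0` these are the matrices
having `v` as an eigenvector; they form a subalgebra. -/
def lineStabilizer {n R : Type*} [Fintype n] [DecidableEq n] [CommRing R] (v : n → R) :
    Subalgebra R (Matrix n n R) where
  carrier := {M | ∃ c : R, M *ᵥ v = c • v}
  mul_mem' := by
    rintro M N ⟨c, hc⟩ ⟨d, hd⟩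
    exact ⟨d * c, by rw [← mulVec_mulVec, hd, mulVec_smul, hc, smul_smul]⟩
  add_mem' := by
    rintro M N ⟨c, hc⟩ ⟨d, hd⟩
    exact ⟨c + d, by rw [add_mulVec, hc, hd, add_smul]⟩
  algebraMap_mem' c := ⟨c, by rw [Algebra.algebraMap_eq_smul_one, smul_mulVec, one_mulVec]⟩

variable {F : Type*} [Field F] {v : Fin 2 → F} {M D : Matrix (Fin 2) (Fin 2) F}

lemma mem_lineStabilizer_iff_wedge_eq_zero (hv : v ≠ 0) :
    M ∈ lineStabilizer v ↔ wedge v (M *ᵥ v) = 0 := by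
  refine ⟨?_, exists_eq_smul_of_wedge_eq_zero hv⟩
  rintro ⟨c, hc⟩
  rw [hc, wedge_smul_right, wedge_self, mul_zero]

lemma exists_forall_mem_lineStabilizer_of_trace_mul_eq_zero (hD : D ≠ 0) (htr : D.trace = 0)
    (hdet : D.det = 0) :
    ∃ v : Fin 2 → F, v ≠ 0 ∧
      ∀ M : Matrix (Fin 2) (Fin 2) F, (M * D).trace = 0 → M ∈ lineStabilizer v := by
  obtain ⟨c, v, hv, rfl⟩ := exists_eq_smul_vecMulVec_rotate htr hdet
  refine ⟨v, hv, fun M hM => (mem_lineStabilizer_iff_wedge_eq_zero hv).mpr ?_⟩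
  rw [mul_smul_comm, trace_smul, trace_mul_vecMulVec_rotate, smul_eq_mul] at hM
  exact (mul_eq_zero.mp hM).resolve_left (left_ne_zero_of_smul hD)

end LineStabilizer

section Collinear

variable {F : Type*} [Field F]

lemma linearIndependent_vec {m n ι : Type*} {P : ι → Matrix m n F} (hP : LinearIndependent F P) :
    LinearIndependent F (of fun i => vec (P i)).row :=
  hP.map' (⟨⟨vec, vec_add⟩, vec_smul⟩ : Matrix m n F →ₗ[F] n × m → F)
    (LinearMap.ker_eq_bot.mpr vec_bijective.injective)

lemma card_add_card_le_of_trace_mul_eq_zero {m n ι κ : Type*} [Fintype m] [Fintype n] [Fintype ι]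
    [Fintype κ] {P : ι → Matrix m n F} {Q : κ → Matrix n m F} (hP : LinearIndependent F P)
    (hQ : LinearIndependent F Q) (hPQ : ∀ i j, (P i * Q j).trace = 0) :
    Fintype.card ι + Fintype.card κ ≤ Fintype.card m * Fintype.card n := by
  have hP' : LinearIndependent F (of fun i => vec (P i)ᵀ).row :=
    linearIndependent_vec (hP.map' _ (transposeLinearEquiv m n F F).ker)
  have hmul : (of fun i => vec (P i)ᵀ) * (of fun j => vec (Q j))ᵀ = 0 := by
    ext i j
    exact (vec_dotProduct_vec _ _).trans (hPQ i j)
  have hrank := rank_add_rank_le_card_of_mul_eq_zero hmul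
  rwa [rank_transpose, hP'.rank_matrix, (linearIndependent_vec hQ).rank_matrix,
    Fintype.card_prod] at hrank

lemma mem_affineSpan_pair_of_not_linearIndependent_sub {V : Type*} [AddCommGroup V] [Module F V]
    {x y z : V} (hxy : x ≠ y) (h : ¬ LinearIndependent F ![y - x, z - x]) : z ∈ line[F, x, y] := by
  rw [LinearIndependent.pair_iff' (sub_ne_zero.mpr hxy.symm)] at h
  push Not at h
  obtain ⟨t, ht⟩ := h
  exact mem_affineSpan_pair_iff_exists_lineMap_eq.mpr
    ⟨t, by rw [AffineMap.lineMap_apply_module', ht, sub_add_cancel]⟩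

lemma mem_affineSpan_pair_of_not_linearIndependent {V : Type*} [AddCommGroup V] [Module F V]
    {x : Fin 3 → V} (hx : x 0 ≠ x 1) (f : V →ₗ[F] F) {τ : F} (hτ : τ ≠ 0) (hf : ∀ i, f (x i) = τ)
    (h : ¬ LinearIndependent F x) : x 2 ∈ line[F, x 0, x 1] := by
  refine mem_affineSpan_pair_of_not_linearIndependent_sub hx fun hsub => h ?_
  rw [Fintype.linearIndependent_iff]
  intro c hc
  rw [Fin.sum_univ_three] at hc
  have hsum : c 0 + c 1 + c 2 = 0 := by
    have hfc := congrArg f hc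
    simp only [map_add, map_smul, hf, map_zero, ← add_smul] at hfc
    exact (smul_eq_zero.mp hfc).resolve_right hτ
  have hc' : c 1 • (x 1 - x 0) + c 2 • (x 2 - x 0) = 0 := by
    linear_combination (norm := module) hc - hsum • x 0
  obtain ⟨h1, h2⟩ := LinearIndependent.pair_iff.mp hsub _ _ hc'
  have h0 : c 0 = 0 := by linear_combination hsum - h1 - h2
  exact Fin.forall_fin_succ.mpr ⟨h0, Fin.forall_fin_two.mpr ⟨h1, h2⟩⟩

end Collinear

section Trisecant

lemma det_add_smul_of_trace_eq_zero {R : Type*} [CommRing R] (Y : Matrix (Fin 2) (Fin 2) R)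
    {D : Matrix (Fin 2) (Fin 2) R} (hD : D.trace = 0) (t : R) :
    (Y + t • D).det = Y.det - t * (Y * D).trace + t ^ 2 * D.det := by
  rw [trace_fin_two] at hD
  simp only [det_fin_two, trace_fin_two, Matrix.mul_apply, Fin.sum_univ_two, Matrix.add_apply,
    Matrix.smul_apply, smul_eq_mul]
  linear_combination t * (Y 0 0 + Y 1 1) * hD

lemma trace_mul_self_of_trace_eq_zero {R : Type*} [CommRing R] {D : Matrix (Fin 2) (Fin 2) R}
    (hD : D.trace = 0) : (D * D).trace = -2 * D.det := by
  rw [trace_fin_two] at hD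
  simp only [det_fin_two, trace_fin_two, Matrix.mul_apply, Fin.sum_univ_two]
  linear_combination (D 0 0 + D 1 1) * hD

variable {F : Type*} [Field F] {τ δ : F}

/-- On the line `Y 0 + t D` the polynomial `det - δ` is quadratic in `t`; having three roots, it
vanishes identically. -/
lemma det_sub_eq_zero_and_trace_mul_sub_eq_zero_of_mem_line {Y : Fin 3 → Matrix (Fin 2) (Fin 2) F}
    (hY : Function.Injective Y) (htr : (Y 0).trace = (Y 1).trace) (hdet : ∀ i, (Y i).det = δ)
    (hline : Y 2 ∈ line[F, Y 0, Y 1]) :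
    (Y 1 - Y 0).det = 0 ∧ (Y 0 * (Y 1 - Y 0)).trace = 0 := by
  obtain ⟨t, ht⟩ := mem_affineSpan_pair_iff_exists_lineMap_eq.mp hline
  have ht0 : t ≠ 0 := by
    rintro rfl
    exact hY.ne (by decide : (0 : Fin 3) ≠ 2) (by rw [← ht, AffineMap.lineMap_apply_zero])
  have ht1 : t ≠ 1 := by
    rintro rfl
    exact hY.ne (by decide : (1 : Fin 3) ≠ 2) (by rw [← ht, AffineMap.lineMap_apply_one])
  have hD : (Y 1 - Y 0).trace = 0 := by rw [trace_sub, htr, sub_self]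
  have hdet1 := det_add_smul_of_trace_eq_zero (Y 0) hD 1
  have hdet2 := det_add_smul_of_trace_eq_zero (Y 0) hD t
  rw [one_smul, add_sub_cancel, hdet, hdet] at hdet1
  rw [add_comm, ← AffineMap.lineMap_apply_module', ht, hdet, hdet] at hdet2
  have hdetD : (Y 1 - Y 0).det = 0 := by
    refine (mul_eq_zero.mp ?_).resolve_left (mul_ne_zero ht0 (sub_ne_zero.mpr ht1))
    linear_combination t * hdet1 - hdet2
  exact ⟨hdetD, by linear_combination hdet1 + hdetD⟩

lemma exists_forall_mem_lineStabilizer_of_mem_line {Y : Fin 3 → Matrix (Fin 2) (Fin 2) F}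
    (hY : Function.Injective Y) (htr : (Y 0).trace = (Y 1).trace) (hdet : ∀ i, (Y i).det = δ)
    (hline : Y 2 ∈ line[F, Y 0, Y 1]) :
    ∃ v : Fin 2 → F, v ≠ 0 ∧ (∀ i, Y i ∈ lineStabilizer v) ∧
      ∀ M : Matrix (Fin 2) (Fin 2) F, (M * Y 0).trace = (M * Y 1).trace →
        M ∈ lineStabilizer v := by
  obtain ⟨hdetD, hYD⟩ := det_sub_eq_zero_and_trace_mul_sub_eq_zero_of_mem_line hY htr hdet hline
  have htrD : (Y 1 - Y 0).trace = 0 := by rw [trace_sub, htr, sub_self]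
  obtain ⟨v, hv, hstab⟩ := exists_forall_mem_lineStabilizer_of_trace_mul_eq_zero
    (sub_ne_zero.mpr (hY.ne Fin.zero_ne_one.symm)) htrD hdetD
  have hD : Y 1 - Y 0 ∈ lineStabilizer v :=
    hstab _ (by rw [trace_mul_self_of_trace_eq_zero htrD, hdetD, mul_zero])
  have hY0 : Y 0 ∈ lineStabilizer v := hstab _ hYD
  have hY1 : Y 1 ∈ lineStabilizer v := by
    simpa only [sub_add_cancel] using add_mem hD hY0
  have hY2 : Y 2 ∈ lineStabilizer v := by
    obtain ⟨t, ht⟩ := mem_affineSpan_pair_iff_exists_lineMap_eq.mp hline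
    rw [← ht, AffineMap.lineMap_apply_module']
    exact add_mem (Subalgebra.smul_mem _ hD t) hY0
  refine ⟨v, hv, Fin.forall_fin_succ.mpr ⟨hY0, Fin.forall_fin_two.mpr ⟨hY1, hY2⟩⟩, fun M hM => ?_⟩
  exact hstab M (by rw [mul_sub, trace_sub, hM, sub_self])

/-- The matrices `Y` with `tr (a i * Y) = τ` for all `i` form an affine subspace, of dimension at
most one unless the `a i` are linearly dependent. -/
lemma mem_line_or_mul_mem_line_of_trace_mul_eq {a y : Fin 3 → Matrix (Fin 2) (Fin 2) F}
    (hτ : τ ≠ 0) (hy : y 0 ≠ y 1) (hay : a 0 * y 0 ≠ a 1 * y 0)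
    (htr : ∀ i j, (a i * y j).trace = τ) :
    y 2 ∈ line[F, y 0, y 1] ∨ a 2 * y 0 ∈ line[F, a 0 * y 0, a 1 * y 0] := by
  by_cases ha : LinearIndependent F a
  · left
    refine mem_affineSpan_pair_of_not_linearIndependent_sub hy fun hD => ?_
    have hcard := card_add_card_le_of_trace_mul_eq_zero ha hD fun i =>
      Fin.forall_fin_two.mpr ⟨by simp [mul_sub, htr], by simp [mul_sub, htr]⟩
    simp at hcard
  · right
    exact mem_affineSpan_pair_of_not_linearIndependent (x := fun i => a i * y 0) hay
      (traceLinearMap (Fin 2) F F) hτ (fun i => htr i 0)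
      fun h => ha (h.of_comp (LinearMap.mulRight F (y 0)))

end Trisecant

section TraceClass

variable {F : Type*} [Field F]

/-- The set `C_τ` of elements of `SL₂(F)` of trace `τ`. -/
def traceClass (τ : F) : Set SL(2, F) :=
  {g | (g : Matrix (Fin 2) (Fin 2) F).trace = τ}

/-- Two elements of `SL₂(F)` share an eigenvector if they preserve a common line of `F²`. -/
def ShareEigenvector (x y : SL(2, F)) : Prop :=
  ∃ v : Fin 2 → F, v ≠ 0 ∧ (x : Matrix (Fin 2) (Fin 2) F) ∈ lineStabilizer v ∧
    (y : Matrix (Fin 2) (Fin 2) F) ∈ lineStabilizer v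

variable {τ : F}

lemma exists_forall_mul_mem_lineStabilizer_of_mem_traceClass {a y : Fin 3 → SL(2, F)} (hτ : τ ≠ 0)
    (ha : Function.Injective a) (ha0 : a 0 = 1) (hy : Function.Injective y)
    (hay : ∀ i j, a i * y j ∈ traceClass τ) :
    ∃ v : Fin 2 → F, v ≠ 0 ∧
      ∀ i, ((a i * y 0 : SL(2, F)) : Matrix (Fin 2) (Fin 2) F) ∈ lineStabilizer v := by
  have hyτ (j : Fin 3) : y j ∈ traceClass τ := by simpa only [ha0, one_mul] using hay 0 j
  have hay0 : Function.Injective fun i => a i * y 0 := (mul_left_injective _).comp ha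
  rcases mem_line_or_mul_mem_line_of_trace_mul_eq (a := fun i => (a i).1)
      (y := fun i => (y i).1) hτ
      (fun h => hy.ne Fin.zero_ne_one (Subtype.ext h))
      (fun h => hay0.ne Fin.zero_ne_one (Subtype.ext h)) hay with hline | hline
  · obtain ⟨v, hv, hyv, hav⟩ := exists_forall_mem_lineStabilizer_of_mem_line
      (Subtype.val_injective.comp hy) ((hyτ 0).trans (hyτ 1).symm) (fun i => (y i).det_coe) hline
    exact ⟨v, hv, fun i => mul_mem (hav _ ((hay i 0).trans (hay i 1).symm)) (hyv 0)⟩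
  · obtain ⟨v, hv, hyv, -⟩ := exists_forall_mem_lineStabilizer_of_mem_line
      (Subtype.val_injective.comp hay0) ((hay 0 0).trans (hay 1 0).symm)
      (fun i => (a i * y 0).det_coe) hline
    exact ⟨v, hv, hyv⟩

end TraceClass

section GenericPairs

variable {α : Type*} (r : α → α → Prop) (S : Finset α) (y : α)

open Classical in
/-- The ordered pairs `(x, z)` of elements of `S` such that `x`, `y`, `z` are distinct and `y` is
not `r`-related to both `x` and `z`. -/
noncomputable def genericPairs : Finset (α × α) :=
  {q ∈ S ×ˢ S | q.1 ≠ y ∧ q.2 ≠ y ∧ q.1 ≠ q.2 ∧ ¬ (r y q.1 ∧ r y q.2)}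

open Classical in
lemma card_sq_le_card_genericPairs_add :
    #S ^ 2 ≤ #(genericPairs r S y) + 3 * #S + #{x ∈ S | r y x} ^ 2 := by
  have hcover : S ×ˢ S ⊆ genericPairs r S y ∪ ({y} ×ˢ S ∪ S ×ˢ {y} ∪ S.diag) ∪
      {x ∈ S | r y x} ×ˢ {x ∈ S | r y x} := by
    rintro ⟨x, z⟩ hxz
    simp only [genericPairs, mem_union, mem_product, mem_filter, mem_singleton, mem_diag] at hxz ⊢
    tauto
  calc #S ^ 2 = #(S ×ˢ S) := by rw [card_product, sq]
    _ ≤ #(genericPairs r S y) + (#({y} ×ˢ S) + #(S ×ˢ {y}) + #S.diag) +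
        #({x ∈ S | r y x} ×ˢ {x ∈ S | r y x}) := by
      refine (card_le_card hcover).trans ((card_union_le _ _).trans ?_)
      gcongr
      refine (card_union_le _ _).trans ?_
      gcongr
      refine (card_union_le _ _).trans ?_
      gcongr
      exact card_union_le _ _
    _ = #(genericPairs r S y) + 3 * #S + #{x ∈ S | r y x} ^ 2 := by
      simp only [card_product, card_singleton, diag_card]
      ring

end GenericPairs

section LarsenPink

variable {F : Type*} [Field F] {τ : F} {S : Finset SL(2, F)}

lemma card_le_two_of_forall_mem_genericPairs (hτ : τ ≠ 0) (hS : ↑S ⊆ traceClass τ)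
    {g h : SL(2, F)} {P : Finset SL(2, F)}
    (hP : ∀ y ∈ P, y ∈ S ∧ (g * y, h * y) ∈ genericPairs ShareEigenvector S y) : #P ≤ 2 := by
  by_contra! hcard
  obtain ⟨y₀, h₀, y₁, h₁, y₂, h₂, h₀₁, h₀₂, h₁₂⟩ := two_lt_card.mp hcard
  simp only [genericPairs, mem_filter, mem_product, ne_eq, mul_eq_right, mul_left_inj] at hP
  obtain ⟨-, -, hg, hh, hgh, hshare⟩ := hP y₀ h₀
  have ha : Function.Injective ![1, g, h] := by
    simp [Function.Injective, Fin.forall_fin_succ, hg, hh, hgh, Ne.symm hg, Ne.symm hh, Ne.symm hgh]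
  have hy : Function.Injective ![y₀, y₁, y₂] := by
    simp [Function.Injective, Fin.forall_fin_succ, h₀₁, h₀₂, h₁₂, h₀₁.symm, h₀₂.symm, h₁₂.symm]
  have hτ_mem (y : SL(2, F)) (hyP : y ∈ P) :
      y ∈ traceClass τ ∧ g * y ∈ traceClass τ ∧ h * y ∈ traceClass τ :=
    ⟨hS (hP y hyP).1, hS (hP y hyP).2.1.1, hS (hP y hyP).2.1.2⟩
  have hmem : ∀ i j, (![1, g, h] i) * (![y₀, y₁, y₂] j) ∈ traceClass τ := by
    simp [Fin.forall_fin_succ, hτ_mem y₀ h₀, hτ_mem y₁ h₁, hτ_mem y₂ h₂]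
  obtain ⟨v, hv, hstab⟩ := exists_forall_mul_mem_lineStabilizer_of_mem_traceClass hτ
    (a := ![1, g, h]) (y := ![y₀, y₁, y₂]) ha rfl hy hmem
  have hy₀ := hstab 0
  rw [cons_val_zero, cons_val_zero, one_mul] at hy₀
  exact hshare ⟨⟨v, hv, hy₀, hstab 1⟩, ⟨v, hv, hy₀, hstab 2⟩⟩

variable [DecidableEq SL(2, F)]

lemma card_sigma_genericPairs_le (hτ : τ ≠ 0) (hS : ↑S ⊆ traceClass τ) :
    #(S.sigma (genericPairs ShareEigenvector S)) ≤ 2 * #(S * S⁻¹) ^ 2 := by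
  let quotients (t : Σ _ : SL(2, F), SL(2, F) × SL(2, F)) : SL(2, F) × SL(2, F) :=
    (t.2.1 * t.1⁻¹, t.2.2 * t.1⁻¹)
  have hmaps : ∀ t ∈ S.sigma (genericPairs ShareEigenvector S),
      quotients t ∈ (S * S⁻¹) ×ˢ (S * S⁻¹) := by
    rintro ⟨y, x, z⟩ ht
    simp only [genericPairs, mem_sigma, mem_filter, mem_product] at ht
    exact mem_product.mpr ⟨mul_mem_mul ht.2.1.1 (inv_mem_inv ht.1),
      mul_mem_mul ht.2.1.2 (inv_mem_inv ht.1)⟩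
  rw [sq, ← card_product]
  refine card_le_mul_card_image_of_maps_to hmaps 2 ?_
  rintro ⟨g, h⟩ -
  have heq (t) (ht : quotients t = (g, h)) : t.2 = (g * t.1, h * t.1) := by
    obtain ⟨rfl, rfl⟩ := Prod.mk.inj ht
    simp only [inv_mul_cancel_right, Prod.mk.eta]
  rw [← card_image_of_injOn (f := Sigma.fst)]
  · refine card_le_two_of_forall_mem_genericPairs hτ hS (g := g) (h := h) fun y hy => ?_
    obtain ⟨t, ht, rfl⟩ := mem_image.mp hy
    obtain ⟨htS, htgh⟩ := mem_filter.mp ht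
    rw [← heq t htgh]
    exact mem_sigma.mp htS
  · intro t ht t' ht' htt'
    refine Sigma.ext htt' (heq_of_eq ?_)
    rw [heq t (mem_filter.mp ht).2, heq t' (mem_filter.mp ht').2, htt']

open Classical in
lemma card_pow_three_le_of_card_shareEigenvector_le (hτ : τ ≠ 0) (hS : ↑S ⊆ traceClass τ) {E : ℕ}
    (hE : ∀ y ∈ S, #{x ∈ S | ShareEigenvector y x} ≤ E) :
    #S ^ 3 ≤ 2 * #(S * S⁻¹) ^ 2 + 3 * #S ^ 2 + #S * E ^ 2 := by
  calc #S ^ 3 = ∑ _y ∈ S, #S ^ 2 := by rw [sum_const, smul_eq_mul]; ring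
    _ ≤ ∑ y ∈ S, (#(genericPairs ShareEigenvector S y) + 3 * #S + E ^ 2) := by
      refine sum_le_sum fun y hy => (card_sq_le_card_genericPairs_add ShareEigenvector S y).trans ?_
      gcongr
      exact hE y hy
    _ = #(S.sigma (genericPairs ShareEigenvector S)) + 3 * #S ^ 2 + #S * E ^ 2 := by
      simp only [sum_add_distrib, sum_const, smul_eq_mul, card_sigma]; ring
    _ ≤ 2 * #(S * S⁻¹) ^ 2 + 3 * #S ^ 2 + #S * E ^ 2 := by
      gcongr
      exact card_sigma_genericPairs_le hτ hS

end LarsenPink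

section Eigenvalue

lemma smul_add_inv_smul {R : Type*} [CommRing R] (s : SL(2, R)) (v : Fin 2 → R) :
    s • v + s⁻¹ • v = (s : Matrix (Fin 2) (Fin 2) R).trace • v := by
  have hadd : s.1 + s⁻¹.1 = s.1.trace • 1 := by
    rw [Matrix.SpecialLinearGroup.coe_inv, adjugate_fin_two, trace_fin_two]
    ext i j
    fin_cases i <;> fin_cases j <;> simp [add_comm]
  calc s • v + s⁻¹ • v = (s.1 + s⁻¹.1) *ᵥ v := (add_mulVec _ _ v).symm
    _ = s.1.trace • v := by rw [hadd, smul_mulVec, one_mulVec]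

variable {F : Type*} [Field F] {γ : F} {v u : Fin 2 → F}

lemma ne_zero_and_add_inv_eq_trace_of_smul_eq_smul {s : SL(2, F)} (hv : v ≠ 0)
    (hs : s • v = γ • v) : γ ≠ 0 ∧ γ + γ⁻¹ = (s : Matrix (Fin 2) (Fin 2) F).trace := by
  have hγ : γ ≠ 0 := by
    rintro rfl
    exact hv ((smul_eq_zero_iff_eq s).mp (hs.trans (zero_smul F v)))
  have hinv : s⁻¹ • v = γ⁻¹ • v := by
    rw [inv_smul_eq_iff, smul_comm, hs, inv_smul_smul₀ hγ]
  refine ⟨hγ, smul_left_injective F hv ?_⟩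
  simp only [add_smul, ← hs, ← hinv, smul_add_inv_smul]

lemma exists_card_le_two_forall_add_inv_eq_mem (τ : F) :
    ∃ R : Finset F, #R ≤ 2 ∧ ∀ γ : F, γ ≠ 0 → γ + γ⁻¹ = τ → γ ∈ R := by
  classical
  by_cases hex : ∃ β : F, β ≠ 0 ∧ β + β⁻¹ = τ
  · obtain ⟨β, hβ, rfl⟩ := hex
    refine ⟨{β, β⁻¹}, card_le_two, ?_⟩
    intro γ hγ hγβ
    have hroots : (γ - β) * (γ - β⁻¹) = 0 := by
      field_simp at hγβ ⊢
      linear_combination hγβ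
    simpa only [mem_insert, mem_singleton, mul_eq_zero, sub_eq_zero] using hroots
  · exact ⟨∅, by simp, fun γ hγ hγτ => absurd ⟨γ, hγ, hγτ⟩ hex⟩

lemma eq_zero_of_mulVec_eq_zero_of_trace_eq_zero {M : Matrix (Fin 2) (Fin 2) F}
    (hvu : wedge v u ≠ 0) (htr : M.trace = 0) (hv : M *ᵥ v = 0) (hu : wedge u (M *ᵥ u) = 0) :
    M = 0 := by
  have hvMu : wedge v (M *ᵥ u) = 0 := by
    simpa [hv, htr, wedge] using wedge_mulVec_add_wedge_mulVec M v u
  refine eq_zero_of_mulVec_eq_zero_of_wedge_ne_zero hvu hv ?_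
  have hv0 : v ≠ 0 := by
    rintro rfl
    simp [wedge] at hvu
  obtain ⟨c, hc⟩ := exists_eq_smul_of_wedge_eq_zero hv0 hvMu
  rw [hc, wedge_smul_right, wedge_swap, mul_neg, neg_eq_zero] at hu
  rw [hc, (mul_eq_zero.mp hu).resolve_right hvu, zero_smul]

end Eigenvalue

section DoubleCoset

lemma wedge_mul_mul_smul {R : Type*} [CommRing R] {s t : SL(2, R)} {γ : R} {v : Fin 2 → R}
    (hs : s • v = γ • v) (ht : t • v = γ • v) (c : SL(2, R)) :
    wedge v ((s * c * t) • v) = wedge v (c • v) := by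
  rw [mul_smul, ht, smul_comm, wedge_smul_right, ← wedge_smul_left, ← hs, mul_smul,
    wedge_smul_smul]

lemma wedge_inv_mul_mul_smul {R : Type*} [CommRing R] (b s : SL(2, R)) (v : Fin 2 → R) :
    wedge v ((b⁻¹ * s * b) • v) = wedge (b • v) (s • b • v) := by
  rw [← wedge_smul_smul b, mul_smul, mul_smul, smul_inv_smul]

variable {F : Type*} [Field F] {γ τ : F} {v u : Fin 2 → F} {s t s' t' b c : SL(2, F)}
  {T : Finset SL(2, F)}

lemma eq_of_smul_eq_of_trace_eq (hvu : wedge v u ≠ 0)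
    (htr : (s : Matrix (Fin 2) (Fin 2) F).trace = (t : Matrix (Fin 2) (Fin 2) F).trace)
    (hv : s • v = t • v) (hu : wedge u (s • u) = wedge u (t • u)) : s = t := by
  refine Subtype.ext (sub_eq_zero.mp (eq_zero_of_mulVec_eq_zero_of_trace_eq_zero hvu ?_ ?_ ?_))
  · rw [trace_sub, htr, sub_self]
  · rw [sub_mulVec]; exact sub_eq_zero.mpr hv
  · rw [sub_mulVec, wedge_sub_right]; exact sub_eq_zero.mpr hu

lemma eq_of_smul_eq_of_smul_eq (hvu : wedge v u ≠ 0) (hv : s • v = t • v) (hu : s • u = t • u) :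
    s = t := by
  refine Subtype.ext (sub_eq_zero.mp (eq_zero_of_mulVec_eq_zero_of_wedge_ne_zero hvu ?_ ?_))
  · rw [sub_mulVec]; exact sub_eq_zero.mpr hv
  · rw [sub_mulVec]; exact sub_eq_zero.mpr hu

open Classical in
lemma card_le_card_filter_wedge_ne_zero_add_one (hvu : wedge v u ≠ 0)
    (hTτ : ↑T ⊆ traceClass τ) (hTv : ∀ s ∈ T, s • v = γ • v) :
    #T ≤ #{s ∈ T | wedge u (s • u) ≠ 0} + 1 := by
  rw [← card_filter_add_card_filter_not (fun s : SL(2, F) => wedge u (s • u) ≠ 0)]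
  gcongr
  refine card_le_one.mpr fun s hs t ht => ?_
  obtain ⟨hsT, hsu⟩ := mem_filter.mp hs
  obtain ⟨htT, htu⟩ := mem_filter.mp ht
  rw [not_not] at hsu htu
  exact eq_of_smul_eq_of_trace_eq hvu ((hTτ hsT).trans (hTτ htT).symm)
    ((hTv s hsT).trans (hTv t htT).symm) (hsu.trans htu.symm)

lemma eq_and_eq_of_mul_mul_eq_mul_mul (hγ : γ ≠ 0) (hc : wedge v (c • v) ≠ 0) (hs : s • v = γ • v)
    (hs' : s' • v = γ • v) (ht : t • v = γ • v) (ht' : t' • v = γ • v)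
    (h : s * c * t = s' * c * t') : s = s' ∧ t = t' := by
  have hscv : s • c • v = s' • c • v := by
    have hv := congrArg (· • v) h
    simp only [mul_smul, ht, ht', smul_comm _ γ v] at hv
    exact smul_right_injective _ hγ hv
  obtain rfl : s = s' := eq_of_smul_eq_of_smul_eq hc (hs.trans hs'.symm) hscv
  exact ⟨rfl, mul_left_cancel h⟩

/-- The quantity `v ∧ g v` of a product `g = s (b⁻¹ t b) r` does not depend on `s` and `r`, so it
recovers `t`; then `g v` recovers `s`. -/
lemma injOn_mul_inv_mul_mul_mul (hγ : γ ≠ 0) (hb : wedge v (b • v) ≠ 0) (hTτ : ↑T ⊆ traceClass τ)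
    (hTv : ∀ s ∈ T, s • v = γ • v) :
    Set.InjOn (fun q : SL(2, F) × SL(2, F) × SL(2, F) => q.1 * (b⁻¹ * q.2.1 * b) * q.2.2)
      {q | q.1 ∈ T ∧ (q.2.1 ∈ T ∧ wedge (b • v) (q.2.1 • b • v) ≠ 0) ∧ q.2.2 ∈ T} := by
  rintro ⟨s, t, r⟩ ⟨hs, ⟨ht, htb⟩, hr⟩ ⟨s', t', r'⟩ ⟨hs', ⟨ht', -⟩, hr'⟩ heq
  dsimp only at *
  have hwedge := congrArg (fun g : SL(2, F) => wedge v (g • v)) heq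
  simp only [wedge_mul_mul_smul (hTv _ hs) (hTv _ hr), wedge_mul_mul_smul (hTv _ hs') (hTv _ hr'),
    wedge_inv_mul_mul_smul] at hwedge
  obtain rfl : t = t' := eq_of_smul_eq_of_trace_eq hb ((hTτ ht).trans (hTτ ht').symm)
    ((hTv _ ht).trans (hTv _ ht').symm) hwedge
  rw [← wedge_inv_mul_mul_smul] at htb
  obtain ⟨rfl, rfl⟩ := eq_and_eq_of_mul_mul_eq_mul_mul hγ htb (hTv _ hs) (hTv _ hs') (hTv _ hr)
    (hTv _ hr') heq
  rfl

variable [DecidableEq SL(2, F)]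

lemma card_sub_one_pow_three_le_card_mul_conj_mul (hγ : γ ≠ 0) (hb : wedge v (b • v) ≠ 0)
    (hTτ : ↑T ⊆ traceClass τ) (hTv : ∀ s ∈ T, s • v = γ • v) :
    (#T - 1) ^ 3 ≤ #(T * ({b⁻¹} * T * {b}) * T) := by
  classical
  let T' : Finset SL(2, F) := {s ∈ T | wedge (b • v) (s • b • v) ≠ 0}
  have hT' : #T - 1 ≤ #T' :=
    Nat.sub_le_of_le_add (card_le_card_filter_wedge_ne_zero_add_one hb hTτ hTv)
  calc (#T - 1) ^ 3 = (#T - 1) * ((#T - 1) * (#T - 1)) := by ring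
    _ ≤ #T * (#T' * #T) := by gcongr <;> exact Nat.sub_le _ _
    _ = #(T ×ˢ T' ×ˢ T) := by rw [card_product, card_product]
    _ ≤ #(T * ({b⁻¹} * T * {b}) * T) := by
      refine card_le_card_of_injOn _ ?_ ((injOn_mul_inv_mul_mul_mul hγ hb hTτ hTv).mono ?_)
      · rintro ⟨s, t, r⟩ hq
        simp only [T', coe_product, Set.mem_prod, mem_coe, mem_filter] at hq
        exact mul_mem_mul (mul_mem_mul hq.1 (mul_mem_mul (mul_mem_mul (mem_singleton_self _)
          hq.2.1.1) (mem_singleton_self _))) hq.2.2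
      · rintro ⟨s, t, r⟩ hq
        simpa only [T', coe_product, Set.mem_prod, mem_coe, mem_filter, Set.mem_ofPred_eq] using hq

end DoubleCoset

section Center

variable {F : Type*} [Field F] {τ : F}

lemma mem_center_of_smul_eq_smul {x : SL(2, F)} {γ : F} {v w : Fin 2 → F} (hvw : wedge v w ≠ 0)
    (hv : x • v = γ • v) (hw : x • w = γ • w) : x ∈ Subgroup.center SL(2, F) := by
  have hscalar : x.1 - γ • 1 = 0 := by
    refine eq_zero_of_mulVec_eq_zero_of_wedge_ne_zero hvw ?_ ?_ <;>
      rw [sub_mulVec, smul_mulVec, one_mulVec]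
    exacts [sub_eq_zero.mpr hv, sub_eq_zero.mpr hw]
  refine Subgroup.mem_center_iff.mpr fun g => Subtype.ext ?_
  rw [Matrix.SpecialLinearGroup.coe_mul, Matrix.SpecialLinearGroup.coe_mul, sub_eq_zero.mp hscalar,
    Matrix.mul_smul, Matrix.smul_mul, mul_one, one_mul]

lemma eq_of_mem_center_of_mem_traceClass (hτ : τ ≠ 0) {x y : SL(2, F)}
    (hx : x ∈ Subgroup.center SL(2, F)) (hxτ : x ∈ traceClass τ)
    (hy : y ∈ Subgroup.center SL(2, F)) (hyτ : y ∈ traceClass τ) : x = y := by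
  obtain ⟨c, -, hc⟩ := Matrix.SpecialLinearGroup.mem_center_iff.mp hx
  obtain ⟨d, -, hd⟩ := Matrix.SpecialLinearGroup.mem_center_iff.mp hy
  have htrace (r : F) : (scalar (Fin 2) r).trace = r + r := by
    rw [trace_fin_two, scalar_apply, diagonal_apply_eq, diagonal_apply_eq]
  have hcτ : c + c = τ := (htrace c).symm.trans ((congrArg trace hc).trans hxτ)
  have hdτ : d + d = τ := (htrace d).symm.trans ((congrArg trace hd).trans hyτ)
  have htwo : (2 : F) ≠ 0 := fun h => hτ (by rw [← hcτ, ← two_mul, h, zero_mul])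
  have hcd : c = d := mul_left_cancel₀ htwo (by rw [two_mul, two_mul, hcτ, hdτ])
  exact Subtype.ext (by rw [← hc, ← hd, hcd])

open Classical in
lemma card_le_card_filter_notMem_center_add_one (hτ : τ ≠ 0) {S : Finset SL(2, F)}
    (hS : ↑S ⊆ traceClass τ) : #S ≤ #{x ∈ S | x ∉ Subgroup.center SL(2, F)} + 1 := by
  rw [← card_filter_add_card_filter_not (fun x : SL(2, F) => x ∉ Subgroup.center SL(2, F))]
  gcongr
  refine card_le_one.mpr fun x hx y hy => ?_
  obtain ⟨hxS, hxc⟩ := mem_filter.mp hx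
  obtain ⟨hyS, hyc⟩ := mem_filter.mp hy
  exact eq_of_mem_center_of_mem_traceClass hτ (not_not.mp hxc) (hS hxS) (not_not.mp hyc) (hS hyS)

end Center

section SharedEigenvector

variable {F : Type*} [Field F] {τ : F} {S : Finset SL(2, F)} {x : SL(2, F)} {N : ℕ}

open Classical in
lemma card_filter_exists_smul_eq_smul_le (hx : x ∉ Subgroup.center SL(2, F))
    (hN : ∀ v : Fin 2 → F, v ≠ 0 → ∀ γ : F, #{y ∈ S | y • v = γ • v} ≤ N) (α β : F) :
    #{y ∈ S | ∃ v : Fin 2 → F, v ≠ 0 ∧ x • v = α • v ∧ y • v = β • v} ≤ N := by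
  by_cases hv : ∃ v : Fin 2 → F, v ≠ 0 ∧ x • v = α • v
  · obtain ⟨v, hv, hxv⟩ := hv
    refine (card_le_card (monotone_filter_right S ?_)).trans (hN v hv β)
    rintro y - ⟨w, hw, hxw, hyw⟩
    have hwv : wedge w v = 0 := by
      by_contra hne
      exact hx (mem_center_of_smul_eq_smul hne hxw hxv)
    obtain ⟨c, rfl⟩ := exists_eq_smul_of_wedge_eq_zero hw hwv
    rw [smul_comm, hyw, smul_comm]
  · rw [filter_eq_empty_iff.mpr fun y _ ⟨v, hv0, hxv, _⟩ => hv ⟨v, hv0, hxv⟩]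
    exact Nat.zero_le N

open Classical in
lemma card_filter_shareEigenvector_le {R : Finset F} (hR : ∀ γ : F, γ ≠ 0 → γ + γ⁻¹ = τ → γ ∈ R)
    (hS : ↑S ⊆ traceClass τ) (hxτ : x ∈ traceClass τ) (hx : x ∉ Subgroup.center SL(2, F))
    (hN : ∀ v : Fin 2 → F, v ≠ 0 → ∀ γ : F, #{y ∈ S | y • v = γ • v} ≤ N) :
    #{y ∈ S | ShareEigenvector x y} ≤ #R ^ 2 * N := by
  have heigen {s : SL(2, F)} {v : Fin 2 → F} {γ : F} (hsτ : s ∈ traceClass τ) (hv : v ≠ 0)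
      (hs : s • v = γ • v) : γ ∈ R := by
    obtain ⟨hγ, htr⟩ := ne_zero_and_add_inv_eq_trace_of_smul_eq_smul hv hs
    exact hR γ hγ (htr.trans hsτ)
  have hcover : {y ∈ S | ShareEigenvector x y} ⊆ (R ×ˢ R).biUnion fun q =>
      {y ∈ S | ∃ v : Fin 2 → F, v ≠ 0 ∧ x • v = q.1 • v ∧ y • v = q.2 • v} := by
    intro y hy
    obtain ⟨hyS, v, hv, ⟨α, hxv⟩, ⟨β, hyv⟩⟩ := mem_filter.mp hy
    exact mem_biUnion.mpr ⟨(α, β), mem_product.mpr ⟨heigen hxτ hv hxv, heigen (hS hyS) hv hyv⟩,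
      mem_filter.mpr ⟨hyS, v, hv, hxv, hyv⟩⟩
  calc #{y ∈ S | ShareEigenvector x y} ≤ #(R ×ˢ R) * N := (card_le_card hcover).trans
        (card_biUnion_le_card_mul _ _ _ fun q _ => card_filter_exists_smul_eq_smul_le hx hN q.1 q.2)
    _ = #R ^ 2 * N := by rw [card_product, sq]

end SharedEigenvector

section Numerics

variable {K a : ℝ}

lemma rpow_mul_rpow_two_thirds_pow_three (hK : 0 ≤ K) (ha : 0 ≤ a) {k : ℕ} (hk : 1 ≤ k) :
    (K ^ ((4 * (k : ℝ) - 4) / 3) * a ^ ((2 : ℝ) / 3)) ^ 3 = (K ^ (2 * k - 2) * a) ^ 2 := by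
  rw [mul_pow, mul_pow, ← Real.rpow_natCast (K ^ _) 3, ← Real.rpow_natCast (a ^ _) 3,
    ← Real.rpow_mul hK, ← Real.rpow_mul ha, ← pow_mul, ← Real.rpow_natCast K,
    ← Real.rpow_natCast a 2]
  congr 2
  · push_cast [Nat.cast_sub (show 2 ≤ 2 * k by omega)]; ring
  · norm_num

lemma rpow_mul_rpow_one_third_pow_three (ha : 0 ≤ a) (k : ℕ) :
    (K ^ (k : ℝ) * a ^ ((1 : ℝ) / 3)) ^ 3 = K ^ (3 * k) * a := by
  rw [mul_pow, ← Real.rpow_natCast (a ^ _) 3, ← Real.rpow_mul ha, Real.rpow_natCast, ← pow_mul,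
    mul_comm k 3]
  norm_num

lemma one_le_rpow_mul_rpow {x y : ℝ} (hK : 1 ≤ K) (ha : 1 ≤ a) (hx : 0 ≤ x) (hy : 0 ≤ y) :
    1 ≤ K ^ x * a ^ y :=
  one_le_mul_of_one_le_of_one_le (Real.one_le_rpow hK hx) (Real.one_le_rpow ha hy)

lemma le_of_pow_three_le_add {s ρ e : ℝ} (hρ : 0 ≤ ρ) (he : 0 ≤ e)
    (h : s ^ 3 ≤ 2 * ρ ^ 3 + 3 * s ^ 2 + s * e ^ 2) : s ≤ 6 + 2 * ρ + 2 * e := by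
  by_contra! hs
  have hs6 : 6 < s := by linarith
  have hsq : 6 * s ^ 2 < s ^ 3 := by
    rw [pow_succ' s 2]
    gcongr
  have hρs : (2 * ρ) ^ 3 ≤ s ^ 3 := by gcongr; linarith
  have hes : s * (2 * e) ^ 2 ≤ s * s ^ 2 := by gcongr; linarith
  linarith

end Numerics

section Tripling

variable {G : Type*} [Group G] [DecidableEq G] {A : Finset G}

/-- The tripling constant `K = |A³| / |A|`; it is `0` for `A = ∅`. -/
noncomputable def triplingConst (A : Finset G) : ℝ :=
  #(A ^ 3) / #A

lemma one_le_triplingConst (hA : A.Nonempty) : 1 ≤ triplingConst A := by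
  rw [triplingConst, one_le_div (by exact_mod_cast hA.card_pos), pow_succ]
  exact_mod_cast card_le_card_mul_left hA.pow

lemma card_pow_le_triplingConst_pow_mul (hA : A.Nonempty) (hsymm : A⁻¹ = A) {m : ℕ} (hm : 3 ≤ m) :
    (#(A ^ m) : ℝ) ≤ triplingConst A ^ (m - 2) * #A := by
  have hA0 : (#A : ℝ) ≠ 0 := by exact_mod_cast hA.card_pos.ne'
  exact small_pow_of_small_tripling hm (div_mul_cancel₀ _ hA0).ge hsymm

lemma mul_conj_mul_subset_pow (hsymm : A⁻¹ = A) {k : ℕ} {b : G} (hb : b ∈ A)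
    {T : Finset G} (hT : T ⊆ A ^ k) : T * ({b⁻¹} * T * {b}) * T ⊆ A ^ (3 * k + 2) := by
  have hb' : b⁻¹ ∈ A := hsymm ▸ inv_mem_inv hb
  have hpow : A ^ (3 * k + 2) = A ^ k * (A * A ^ k * A) * A ^ k := by
    simp only [← pow_succ, ← pow_succ', ← pow_add]
    congr 1
    ring
  rw [hpow]
  gcongr <;> rwa [singleton_subset_iff]

lemma card_mul_inv_sq_le (hne : A.Nonempty) (hsymm : A⁻¹ = A) {k : ℕ} (hk : 2 ≤ k) {S : Finset G}
    (hSA : S ⊆ A ^ k) : (#(S * S⁻¹) : ℝ) ^ 2 ≤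
      (triplingConst A ^ ((4 * (k : ℝ) - 4) / 3) * (#A : ℝ) ^ ((2 : ℝ) / 3)) ^ 3 := by
  have hsub : S * S⁻¹ ⊆ A ^ (2 * k) := by
    rw [two_mul, pow_add]
    refine mul_subset_mul hSA ?_
    simpa only [← inv_pow, hsymm] using Finset.inv_subset_inv hSA
  rw [rpow_mul_rpow_two_thirds_pow_three (zero_le_one.trans (one_le_triplingConst hne))
    (Nat.cast_nonneg _) (by omega)]
  gcongr
  calc (#(S * S⁻¹) : ℝ) ≤ #(A ^ (2 * k)) := by exact_mod_cast card_le_card hsub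
    _ ≤ triplingConst A ^ (2 * k - 2) * #A :=
      card_pow_le_triplingConst_pow_mul hne hsymm (by omega)

end Tripling

section TraceClassBound

variable {F : Type*} [Field F] [DecidableEq SL(2, F)] {τ : F} {A : Finset SL(2, F)} {k : ℕ}

open Classical in
lemma card_filter_smul_eq_smul_le (hsymm : A⁻¹ = A)
    (hA : ∀ v : Fin 2 → F, v ≠ 0 → ∃ b ∈ A, ∀ c : F, b • v ≠ c • v) (hk : 1 ≤ k)
    {S : Finset SL(2, F)} (hSA : S ⊆ A ^ k) (hSτ : ↑S ⊆ traceClass τ) {v : Fin 2 → F} (hv : v ≠ 0)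
    (γ : F) :
    #{s ∈ S | s • v = γ • v} ≤
      ⌊triplingConst A ^ (k : ℝ) * (#A : ℝ) ^ ((1 : ℝ) / 3)⌋₊ + 1 := by
  obtain ⟨b, hbA, hb⟩ := hA v hv
  set T : Finset SL(2, F) := {s ∈ S | s • v = γ • v}
  obtain hT | ⟨t, ht⟩ := T.eq_empty_or_nonempty
  · simp [hT]
  have hTS : T ⊆ S := filter_subset _ S
  have hwedge : wedge v (b • v) ≠ 0 := fun h =>
    (exists_eq_smul_of_wedge_eq_zero hv h).elim hb
  have hγ : γ ≠ 0 := (ne_zero_and_add_inv_eq_trace_of_smul_eq_smul hv (mem_filter.mp ht).2).1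
  have hcube : (#T - 1) ^ 3 ≤ #(A ^ (3 * k + 2)) :=
    (card_sub_one_pow_three_le_card_mul_conj_mul hγ hwedge ((coe_subset.mpr hTS).trans hSτ)
      fun s hs => (mem_filter.mp hs).2).trans
        (card_le_card (mul_conj_mul_subset_pow hsymm hbA (hTS.trans hSA)))
  refine Nat.le_add_of_sub_le (Nat.le_floor (le_of_pow_le_pow_left₀ three_ne_zero ?_ ?_))
  · have := (one_le_triplingConst ⟨b, hbA⟩); positivity
  calc ((#T - 1 : ℕ) : ℝ) ^ 3 ≤ #(A ^ (3 * k + 2)) := by exact_mod_cast hcube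
    _ ≤ triplingConst A ^ (3 * k) * #A :=
      card_pow_le_triplingConst_pow_mul ⟨b, hbA⟩ hsymm (by omega)
    _ = _ := (rpow_mul_rpow_one_third_pow_three (Nat.cast_nonneg _) k).symm

open Classical in
lemma card_le_of_forall_notMem_center (hτ : τ ≠ 0) {R : Finset F}
    (hR : ∀ γ : F, γ ≠ 0 → γ + γ⁻¹ = τ → γ ∈ R) {S : Finset SL(2, F)} (hSτ : ↑S ⊆ traceClass τ)
    (hS : ∀ x ∈ S, x ∉ Subgroup.center SL(2, F)) {N : ℕ}
    (hN : ∀ v : Fin 2 → F, v ≠ 0 → ∀ γ : F, #{s ∈ S | s • v = γ • v} ≤ N) {ρ : ℝ} (hρ : 0 ≤ ρ)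
    (hSρ : (#(S * S⁻¹) : ℝ) ^ 2 ≤ ρ ^ 3) : (#S : ℝ) ≤ 6 + 2 * ρ + 2 * (#R ^ 2 * N) := by
  have hshare (x) (hx : x ∈ S) : #{y ∈ S | ShareEigenvector x y} ≤ #R ^ 2 * N :=
    card_filter_shareEigenvector_le hR hSτ (hSτ hx) (hS x hx) hN
  refine le_of_pow_three_le_add hρ (by positivity) ?_
  calc (#S : ℝ) ^ 3 ≤ 2 * #(S * S⁻¹) ^ 2 + 3 * #S ^ 2 + #S * (#R ^ 2 * N) ^ 2 := by
        exact_mod_cast card_pow_three_le_of_card_shareEigenvector_le hτ hSτ hshare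
    _ ≤ 2 * ρ ^ 3 + 3 * #S ^ 2 + #S * (#R ^ 2 * N) ^ 2 := by gcongr

lemma card_le_of_subset_pow_of_notMem_center (hsymm : A⁻¹ = A)
    (hA : ∀ v : Fin 2 → F, v ≠ 0 → ∃ b ∈ A, ∀ c : F, b • v ≠ c • v) (hτ : τ ≠ 0) {R : Finset F}
    (hR : ∀ γ : F, γ ≠ 0 → γ + γ⁻¹ = τ → γ ∈ R) (hk : 2 ≤ k) {S : Finset SL(2, F)}
    (hSA : S ⊆ A ^ k) (hSτ : ↑S ⊆ traceClass τ) (hS : ∀ x ∈ S, x ∉ Subgroup.center SL(2, F)) :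
    (#S : ℝ) ≤
      8 * (triplingConst A ^ ((4 * (k : ℝ) - 4) / 3) * (#A : ℝ) ^ ((2 : ℝ) / 3)) +
        4 * #R ^ 2 * (triplingConst A ^ (k : ℝ) * (#A : ℝ) ^ ((1 : ℝ) / 3)) := by
  have hne : A.Nonempty := (hA 1 one_ne_zero).imp fun _ h => h.1
  have hK := one_le_triplingConst hne
  have ha : (1 : ℝ) ≤ #A := by exact_mod_cast hne.card_pos
  have hk' : (2 : ℝ) ≤ k := by exact_mod_cast hk
  have hρ := card_mul_inv_sq_le hne hsymm hk hSA
  have hN (v : Fin 2 → F) (hv : v ≠ 0) (γ : F) :=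
    card_filter_smul_eq_smul_le hsymm hA (one_le_two.trans hk) hSA hSτ hv γ
  have hρ1 : 1 ≤ triplingConst A ^ ((4 * (k : ℝ) - 4) / 3) * (#A : ℝ) ^ ((2 : ℝ) / 3) :=
    one_le_rpow_mul_rpow hK ha (by linarith) (by norm_num)
  have hm1 : 1 ≤ triplingConst A ^ (k : ℝ) * (#A : ℝ) ^ ((1 : ℝ) / 3) :=
    one_le_rpow_mul_rpow hK ha (by positivity) (by norm_num)
  generalize triplingConst A ^ ((4 * (k : ℝ) - 4) / 3) * (#A : ℝ) ^ ((2 : ℝ) / 3) = ρ at *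
  generalize triplingConst A ^ (k : ℝ) * (#A : ℝ) ^ ((1 : ℝ) / 3) = m at *
  have hfloor : ((⌊m⌋₊ + 1 : ℕ) : ℝ) ≤ 2 * m := by
    push_cast
    linarith [Nat.floor_le (zero_le_one.trans hm1)]
  calc (#S : ℝ) ≤ 6 + 2 * ρ + 2 * (#R ^ 2 * (⌊m⌋₊ + 1 : ℕ)) :=
        card_le_of_forall_notMem_center hτ hR hSτ hS hN (zero_le_one.trans hρ1) hρ
    _ ≤ 6 * ρ + 2 * ρ + 2 * (#R ^ 2 * (2 * m)) := by
      gcongr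
      linarith
    _ = 8 * ρ + 4 * #R ^ 2 * m := by ring

open Classical in
lemma card_filter_mem_traceClass_le (hsymm : A⁻¹ = A)
    (hA : ∀ v : Fin 2 → F, v ≠ 0 → ∃ b ∈ A, ∀ c : F, b • v ≠ c • v) (hτ : τ ≠ 0) {R : Finset F}
    (hR : ∀ γ : F, γ ≠ 0 → γ + γ⁻¹ = τ → γ ∈ R) (hk : 2 ≤ k) :
    (#{x ∈ A ^ k | x ∈ traceClass τ} : ℝ) ≤
      9 * (triplingConst A ^ ((4 * (k : ℝ) - 4) / 3) * (#A : ℝ) ^ ((2 : ℝ) / 3)) +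
        4 * #R ^ 2 * (triplingConst A ^ (k : ℝ) * (#A : ℝ) ^ ((1 : ℝ) / 3)) := by
  have hne : A.Nonempty := (hA 1 one_ne_zero).imp fun _ h => h.1
  have hk' : (2 : ℝ) ≤ k := by exact_mod_cast hk
  set S : Finset SL(2, F) := {x ∈ A ^ k | x ∈ traceClass τ}
  have hSτ : ↑S ⊆ traceClass τ := fun x hx => (mem_filter.mp hx).2
  have hcenter : (#S : ℝ) ≤ #{x ∈ S | x ∉ Subgroup.center SL(2, F)} + 1 := by
    exact_mod_cast card_le_card_filter_notMem_center_add_one hτ hSτ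
  have hnoncentral := card_le_of_subset_pow_of_notMem_center hsymm hA hτ hR hk
    ((filter_subset (· ∉ Subgroup.center SL(2, F)) S).trans (filter_subset _ _))
    ((coe_subset.mpr (filter_subset _ S)).trans hSτ) fun x hx => (mem_filter.mp hx).2
  have hρ1 : 1 ≤ triplingConst A ^ ((4 * (k : ℝ) - 4) / 3) * (#A : ℝ) ^ ((2 : ℝ) / 3) :=
    one_le_rpow_mul_rpow (one_le_triplingConst hne) (by exact_mod_cast hne.card_pos)
      (by linarith) (by norm_num)
  linarith

end TraceClassBound

section Closure

variable {F : Type*} [Field F]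

lemma exists_smul_ne_smul {v : Fin 2 → F} (hv : v ≠ 0) :
    ∃ g : SL(2, F), ∀ c : F, g • v ≠ c • v := by
  by_contra! h
  have hwedge (M : Matrix (Fin 2) (Fin 2) F) (hM : M.det = 1) : wedge v (M *ᵥ v) = 0 := by
    obtain ⟨c, hc⟩ : ∃ c : F, M *ᵥ v = c • v := h ⟨M, hM⟩
    rw [hc, wedge_smul_right, wedge_self, mul_zero]
  have hv0 : v 0 = 0 := by
    simpa [wedge, mulVec, dotProduct, mul_add, add_mul, mul_comm (v 1)] using
      hwedge !![1, 0; 1, 1] (by simp)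
  have hv1 : v 1 = 0 := by
    simpa [wedge, mulVec, dotProduct, mul_add, add_mul, mul_comm (v 1)] using
      hwedge !![1, 1; 0, 1] (by simp)
  exact hv (by ext i; fin_cases i <;> assumption)

lemma exists_mem_smul_ne_smul_of_closure_eq_top {A : Set SL(2, F)} (hA : Subgroup.closure A = ⊤)
    {v : Fin 2 → F} (hv : v ≠ 0) : ∃ g ∈ A, ∀ c : F, g • v ≠ c • v := by
  by_contra! h
  have hline (g : SL(2, F)) : ∃ c : F, g • v = c • v := by
    induction hA ▸ Subgroup.mem_top g using Subgroup.closure_induction with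
    | mem x hx => exact h x hx
    | one => exact ⟨1, by rw [one_smul, one_smul]⟩
    | mul x y _ _ hx hy =>
      obtain ⟨c, hc⟩ := hx
      obtain ⟨d, hd⟩ := hy
      exact ⟨d * c, by rw [mul_smul, hd, smul_comm, hc, smul_smul]⟩
    | inv x _ hx =>
      obtain ⟨c, hc⟩ := hx
      exact ⟨(x : Matrix (Fin 2) (Fin 2) F).trace - c, by
        rw [sub_smul, ← smul_add_inv_smul, hc, add_sub_cancel_left]⟩
  obtain ⟨g, hg⟩ := exists_smul_ne_smul hv
  exact (hline g).elim hg

end Closure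

theorem SL2_trace_intersection_general {F : Type*} [Field F] [DecidableEq SL(2, F)]
    {A : Finset SL(2, F)} (hsymm : A⁻¹ = A)
    (hA : ∀ v : Fin 2 → F, v ≠ 0 → ∃ b ∈ A, ∀ c : F, b • v ≠ c • v) {τ : F} (hτ : τ ≠ 0) {k : ℕ}
    (hk : 2 ≤ k) :
    (Set.ncard (↑(A ^ k) ∩ traceClass τ) ≤
      16 * (triplingConst A ^ ((4 * (k : ℝ) - 4) / 3) * (#A : ℝ) ^ ((2 : ℝ) / 3) +
        triplingConst A ^ (k : ℝ) * (#A : ℝ) ^ ((1 : ℝ) / 3))) ∧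
    ((∀ γ : Fˣ, (γ : F) + ((γ⁻¹ : Fˣ) : F) ≠ τ) →
      Set.ncard (↑(A ^ k) ∩ traceClass τ) ≤
        16 * (triplingConst A ^ ((4 * (k : ℝ) - 4) / 3) * (#A : ℝ) ^ ((2 : ℝ) / 3))) := by
  classical
  have hcard : Set.ncard (↑(A ^ k) ∩ traceClass τ) = #{x ∈ A ^ k | x ∈ traceClass τ} := by
    rw [← Set.ncard_coe_finset, coe_filter]
    rfl
  have hK : 0 ≤ triplingConst A := by unfold triplingConst; positivity
  rw [hcard]
  constructor
  · obtain ⟨R, hR2, hR⟩ := exists_card_le_two_forall_add_inv_eq_mem τ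
    refine (card_filter_mem_traceClass_le hsymm hA hτ hR hk).trans ?_
    rw [mul_add]
    gcongr
    · norm_num
    · calc (4 : ℝ) * #R ^ 2 ≤ 4 * 2 ^ 2 := by gcongr; exact_mod_cast hR2
        _ = 16 := by norm_num
  · intro hγ
    refine (card_filter_mem_traceClass_le hsymm hA hτ (R := ∅) (fun γ hγ0 hγτ => ?_) hk).trans ?_
    · exact absurd hγτ (hγ (Units.mk0 γ hγ0))
    · rw [card_empty, Nat.cast_zero, zero_pow two_ne_zero, mul_zero, zero_mul, add_zero]
      gcongr
      norm_num

/-- **Lemma 2.7** (Main Larsen–Pink type lemma): there is an absolute constant `C` such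
that for every prime `p`, every finite symmetric generating set `A` of `SL₂(F_p)` with
`K = |A³|/|A|`, every trace value `τ ≠ 0` and every `k ≥ 2`:
`|A^k ∩ C_τ| ≤ C·(K^{(4k-4)/3}·|A|^{2/3} + K^k·|A|^{1/3})`; moreover, if `τ = γ + γ⁻¹`
has no solution `γ ∈ F_p*`, then `|A^k ∩ C_τ| ≤ C·K^{(4k-4)/3}·|A|^{2/3}`. -/
theorem SL2_trace_intersection :
    ∃ C : ℝ, 0 < C ∧
      ∀ (p : ℕ), p.Prime →
        ∀ A : Finset (Matrix.SpecialLinearGroup (Fin 2) (ZMod p)),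
          A⁻¹ = A →
          Subgroup.closure (A : Set (Matrix.SpecialLinearGroup (Fin 2) (ZMod p))) = ⊤ →
          ∀ τ : ZMod p, τ ≠ 0 → ∀ k : ℕ, 2 ≤ k →
            ((Set.ncard {x : Matrix.SpecialLinearGroup (Fin 2) (ZMod p) |
                x ∈ A ^ k ∧ Matrix.trace (x : Matrix (Fin 2) (Fin 2) (ZMod p)) = τ} : ℝ)
              ≤ C * ((((A ^ 3).card : ℝ) / (A.card : ℝ)) ^ ((4 * (k : ℝ) - 4) / 3) *
                    (A.card : ℝ) ^ ((2 : ℝ) / 3) +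
                  (((A ^ 3).card : ℝ) / (A.card : ℝ)) ^ ((k : ℝ)) *
                    (A.card : ℝ) ^ ((1 : ℝ) / 3))) ∧
            ((∀ γ : (ZMod p)ˣ, (γ : ZMod p) + ((γ⁻¹ : (ZMod p)ˣ) : ZMod p) ≠ τ) →
              (Set.ncard {x : Matrix.SpecialLinearGroup (Fin 2) (ZMod p) |
                  x ∈ A ^ k ∧ Matrix.trace (x : Matrix (Fin 2) (Fin 2) (ZMod p)) = τ} : ℝ)
                ≤ C * (((A ^ 3).card : ℝ) / (A.card : ℝ)) ^ ((4 * (k : ℝ) - 4) / 3) *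
                    (A.card : ℝ) ^ ((2 : ℝ) / 3)) := by
  refine ⟨16, by norm_num, fun p hp A hsymm hgen τ hτ k hk => ?_⟩
  have := Fact.mk hp
  have hA (v : Fin 2 → ZMod p) (hv : v ≠ 0) := exists_mem_smul_ne_smul_of_closure_eq_top hgen hv
  simp only [mul_assoc]
  exact SL2_trace_intersection_general hsymm hA hτ hk
end
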